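/- arXiv:2509.18673 — 2 statements merged into one kernel-verified Lean document; each statement's English description precedes it below -/
import Mathlib

section
/- For every fair division instance with n agents, m indivisible items and additive valuations, in which every item is a good (valued strictly positively by all agents), a chore (valued strictly negatively by all agents), or a nonnegatively-valued item (valued nonnegatively by all agents, strictly positively by at least one agent, and zero by at least one agent), there exists an allocation that is simultaneously IEF1 and Pareto optimal. -/
open Finset

/-- Value of a bundle under an additive valuation. -/
def bval {α : Type*} (u : α → ℝ) (S : Finset α) : ℝ := ∑ j ∈ S, u j

/-- An allocation: every item belongs to exactly one agent's bundle. -/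
def IsAlloc {n m : ℕ} (A : Fin n → Finset (Fin m)) : Prop :=
  ∀ j : Fin m, ∃! i : Fin n, j ∈ A i

/-- IEF1: each agent `i` can remove or (hypothetically) add a single item to its own
bundle so that it does not envy any other bundle. -/
def IEF1 {n m : ℕ} (u : Fin n → Fin m → ℝ) (A : Fin n → Finset (Fin m)) : Prop :=
  ∀ i : Fin n, ∃ S : Finset (Fin m), S.card ≤ 1 ∧
    ∀ j : Fin n, bval (u i) (A j) ≤ bval (u i) (symmDiff (A i) S)

/-- Pareto optimality: no allocation weakly improves all agents and strictly improves one. -/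
def ParetoOptimal {n m : ℕ} (u : Fin n → Fin m → ℝ) (A : Fin n → Finset (Fin m)) : Prop :=
  ¬ ∃ B : Fin n → Finset (Fin m), IsAlloc B ∧
      (∀ i, bval (u i) (A i) ≤ bval (u i) (B i)) ∧
      ∃ a, bval (u a) (A a) < bval (u a) (B a)

section Sperner

/-- Parity bookkeeping for a single vertex whose label changes. -/
theorem comb_parity {n : ℕ} (f : Fin n → Fin n) (ky a b : Fin n) (hab : a ≠ b) (hf : f ky = a) :
    ((Finset.univ.filter (fun k : Fin n => k ≠ ky ∧ ∀ c, c ≠ a → c ≠ b →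
        ∃ l, l ≠ k ∧ l ≠ ky ∧ f l = c)).card : ZMod 2) =
      (open Classical in if Function.Surjective f then 1 else 0) +
      (open Classical in if Function.Surjective (Function.update f ky b) then 1 else 0) := by
  classical
  set S := Finset.univ.filter (fun k : Fin n => k ≠ ky ∧ ∀ c, c ≠ a → c ≠ b →
        ∃ l, l ≠ k ∧ l ≠ ky ∧ f l = c) with hS
  have two : (1 : ZMod 2) + 1 = 0 := by decide
  by_cases hemp : S = ∅
  · have h1 : ¬ Function.Surjective f := by
      intro hs
      obtain ⟨k, hk⟩ := hs b
      have : k ∈ S := by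
        simp only [hS, Finset.mem_filter, Finset.mem_univ, true_and]
        refine ⟨fun h => hab (by rw [← hf, ← h, hk]), fun c hca hcb => ?_⟩
        obtain ⟨l, hl⟩ := hs c
        refine ⟨l, ?_, ?_, hl⟩
        · rintro rfl; exact hcb (hl.symm.trans hk)
        · rintro rfl; exact hca (hl.symm.trans hf)
      simp [hemp] at this
    have h2 : ¬ Function.Surjective (Function.update f ky b) := by
      intro hs
      obtain ⟨k, hk⟩ := hs a
      have hkk : k ≠ ky := by
        rintro rfl
        simp at hk; exact hab hk.symm
      have hk' : f k = a := by simpa [Function.update_of_ne hkk] using hk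
      have : k ∈ S := by
        simp only [hS, Finset.mem_filter, Finset.mem_univ, true_and]
        refine ⟨hkk, fun c hca hcb => ?_⟩
        obtain ⟨l, hl⟩ := hs c
        have hlk : l ≠ ky := by
          rintro rfl
          simp at hl; exact hcb hl.symm
        rw [Function.update_of_ne hlk] at hl
        refine ⟨l, ?_, hlk, hl⟩
        rintro rfl; exact hca (hl.symm.trans hk')
      simp [hemp] at this
    simp [hemp, h1, h2]
  · obtain ⟨k, hk⟩ := Finset.nonempty_iff_ne_empty.mpr hemp
    have hk2 := hk
    simp only [hS, Finset.mem_filter, Finset.mem_univ, true_and] at hk2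
    obtain ⟨hkk, hcov⟩ := hk2
    -- the rest is a bijection onto the other labels
    have hsub : (({a, b} : Finset (Fin n))ᶜ) ⊆ (({k, ky} : Finset (Fin n))ᶜ).image f := by
      intro c hc
      simp at hc
      obtain ⟨l, h1, h2, h3⟩ := hcov c hc.1 hc.2
      simp only [Finset.mem_image]
      exact ⟨l, by simp [h1, h2], h3⟩
    have c1 : (({a, b} : Finset (Fin n))ᶜ).card = n - 2 := by
      rw [Finset.card_compl, Finset.card_pair hab]; simp
    have c2 : (({k, ky} : Finset (Fin n))ᶜ).card = n - 2 := by
      rw [Finset.card_compl, Finset.card_pair hkk]; simp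
    have himg : (({a, b} : Finset (Fin n))ᶜ) = (({k, ky} : Finset (Fin n))ᶜ).image f := by
      apply Finset.eq_of_subset_of_card_le hsub
      rw [c1, ← c2]; exact Finset.card_image_le
    have hinj : Set.InjOn f ((({k, ky} : Finset (Fin n))ᶜ : Finset (Fin n)) : Set (Fin n)) := by
      rw [← Finset.card_image_iff, ← himg, c1, c2]
    have hout : ∀ l, l ≠ k → l ≠ ky → f l ≠ a ∧ f l ≠ b := by
      intro l h1 h2
      have : f l ∈ (({a, b} : Finset (Fin n))ᶜ) := by
        rw [himg]; exact Finset.mem_image_of_mem _ (by simp [h1, h2])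
      simpa using this
    have hinj' : ∀ l l', l ≠ k → l ≠ ky → l' ≠ k → l' ≠ ky → f l = f l' → l = l' := by
      intro l l' h1 h2 h3 h4 h
      exact hinj (by simp [h1, h2]) (by simp [h3, h4]) h
    by_cases hb : f k = b
    · have hs1 : Function.Surjective f := by
        intro c
        by_cases hca : c = a
        · exact ⟨ky, by rw [hf, hca]⟩
        by_cases hcb : c = b
        · exact ⟨k, by rw [hb, hcb]⟩
        obtain ⟨l, _, _, h⟩ := hcov c hca hcb
        exact ⟨l, h⟩
      have hs2 : ¬ Function.Surjective (Function.update f ky b) := by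
        intro hs
        obtain ⟨l, hl⟩ := hs a
        by_cases h : l = ky
        · subst h; simp at hl; exact hab hl.symm
        rw [Function.update_of_ne h] at hl
        by_cases h' : l = k
        · subst h'; exact hab (hl.symm.trans hb)
        · exact (hout l h' h).1 hl
      have hS1 : S = {k} := by
        apply Finset.eq_singleton_iff_unique_mem.mpr ⟨hk, ?_⟩
        intro k' hk'
        simp only [hS, Finset.mem_filter, Finset.mem_univ, true_and] at hk'
        by_contra hne
        obtain ⟨h1, h2⟩ := hout k' hne hk'.1
        obtain ⟨l, e1, e2, e3⟩ := hk'.2 _ h1 h2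
        by_cases h : l = k
        · subst h; exact h2 (e3.symm.trans hb)
        · exact e1 (hinj' l k' h e2 hne hk'.1 e3)
      rw [hS1, if_pos hs1, if_neg hs2]; simp
    by_cases ha : f k = a
    · have hs1 : ¬ Function.Surjective f := by
        intro hs
        obtain ⟨l, hl⟩ := hs b
        by_cases h : l = ky
        · subst h; exact hab (hf.symm.trans hl)
        by_cases h' : l = k
        · subst h'; exact hb hl
        · exact (hout l h' h).2 hl
      have hs2 : Function.Surjective (Function.update f ky b) := by
        intro c
        by_cases hca : c = a
        · exact ⟨k, by rw [Function.update_of_ne hkk, ha, hca]⟩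
        by_cases hcb : c = b
        · exact ⟨ky, by simp [hcb]⟩
        obtain ⟨l, _, h2, h⟩ := hcov c hca hcb
        exact ⟨l, by rw [Function.update_of_ne h2, h]⟩
      have hS1 : S = {k} := by
        apply Finset.eq_singleton_iff_unique_mem.mpr ⟨hk, ?_⟩
        intro k' hk'
        simp only [hS, Finset.mem_filter, Finset.mem_univ, true_and] at hk'
        by_contra hne
        obtain ⟨h1, h2⟩ := hout k' hne hk'.1
        obtain ⟨l, e1, e2, e3⟩ := hk'.2 _ h1 h2
        by_cases h : l = k
        · subst h; exact h1 (e3.symm.trans ha)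
        · exact e1 (hinj' l k' h e2 hne hk'.1 e3)
      rw [hS1, if_neg hs1, if_pos hs2]; simp
    · have hs1 : ¬ Function.Surjective f := by
        intro hs
        obtain ⟨l, hl⟩ := hs b
        by_cases h : l = ky
        · subst h; exact hab (hf.symm.trans hl)
        by_cases h' : l = k
        · subst h'; exact hb hl
        · exact (hout l h' h).2 hl
      have hs2 : ¬ Function.Surjective (Function.update f ky b) := by
        intro hs
        obtain ⟨l, hl⟩ := hs a
        by_cases h : l = ky
        · subst h; simp at hl; exact hab hl.symm
        rw [Function.update_of_ne h] at hl
        by_cases h' : l = k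
        · subst h'; exact ha hl
        · exact (hout l h' h).1 hl
      obtain ⟨k2, q1, q2, q3⟩ := hcov (f k) ha hb
      have hS2 : S = {k, k2} := by
        ext k'
        constructor
        · intro hk'
          simp only [hS, Finset.mem_filter, Finset.mem_univ, true_and] at hk'
          simp only [Finset.mem_insert, Finset.mem_singleton]
          by_contra hne
          push Not at hne
          obtain ⟨h1, h2⟩ := hout k' hne.1 hk'.1
          obtain ⟨l, e1, e2, e3⟩ := hk'.2 _ h1 h2
          by_cases h : l = k
          · subst h
            exact hne.2 (hinj' k' k2 hne.1 hk'.1 q1 q2 (e3.symm.trans q3.symm))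
          · exact e1 (hinj' l k' h e2 hne.1 hk'.1 e3)
        · intro hk'
          simp only [Finset.mem_insert, Finset.mem_singleton] at hk'
          rcases hk' with rfl | rfl
          · exact hk
          · simp only [hS, Finset.mem_filter, Finset.mem_univ, true_and]
            refine ⟨q2, fun c hca hcb => ?_⟩
            by_cases hc : c = f k
            · exact ⟨k, fun h => q1 h.symm, hkk, hc.symm⟩
            · obtain ⟨l, e1, e2, e3⟩ := hcov c hca hcb
              refine ⟨l, ?_, e2, e3⟩
              rintro rfl
              exact hc (e3.symm.trans q3)
      rw [hS2, Finset.card_pair (fun h => q1 h.symm), if_neg hs1, if_neg hs2]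
      decide

abbrev Alc (N : ℕ) := (Fin (N+1) → ℤ) × Equiv.Perm (Fin (N+1))

/-- The `k`-th vertex of an alcove. -/
def vtx {N : ℕ} (T : Alc N) (k : Fin (N+1)) : Fin (N+1) → ℤ :=
  fun i => T.1 i + if T.2 i < k then 1 else 0

/-- Exchange of the `k`-th vertex. -/
def flipA {N : ℕ} (k : Fin (N+1)) (T : Alc N) : Alc N :=
  (fun i => T.1 i + if k = 0 then
      ((if T.2 i = 0 then 1 else 0) - (if T.2 i = Fin.last N then 1 else 0)) else 0,
   T.2.trans (Equiv.swap (k - 1) k))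

theorem fin_sub_one_val {N : ℕ} (k : Fin (N+1)) (hk : k ≠ 0) : (k - 1).val = k.val - 1 := by
  rw [Fin.val_sub_one_of_ne_zero hk]

theorem fin_zero_sub_one {N : ℕ} : (0 - 1 : Fin (N+1)) = Fin.last N := by
  rw [sub_eq_iff_eq_add]; simp

theorem vtx_flip {N : ℕ} (T : Alc N) (k l : Fin (N+1)) (h : l ≠ k) :
    vtx (flipA k T) l = vtx T l := by
  funext i
  simp only [vtx, flipA, Equiv.trans_apply]
  obtain ⟨p, hp⟩ : ∃ p, T.2 i = p := ⟨_, rfl⟩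
  simp only [hp]
  by_cases hk : k = 0
  · subst hk
    rw [fin_zero_sub_one]
    have hl : (0 : Fin (N+1)) < l := Fin.pos_of_ne_zero h
    have hN : (0 : Fin (N+1)) ≠ Fin.last N := by
      intro hh
      have := Fin.le_last l
      rw [← hh] at this
      exact absurd (lt_of_lt_of_le hl this) (lt_irrefl _)
    have h3 : ¬ Fin.last N < l := not_lt.mpr (Fin.le_last l)
    by_cases h1 : p = 0
    · subst h1
      simp [Equiv.swap_apply_right, hN, hl, h3]
    by_cases h2 : p = Fin.last N
    · subst h2
      simp [Equiv.swap_apply_left, hN.symm, hl, h3]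
    · rw [Equiv.swap_apply_of_ne_of_ne h2 h1]
      simp [h1, h2]
  · simp only [hk, if_false, add_zero]
    have hv := fin_sub_one_val k hk
    have hk0 : k.val ≠ 0 := fun hh => hk (Fin.ext hh)
    have hlk : l.val ≠ k.val := fun hh => h (Fin.ext hh)
    congr 1
    by_cases h1 : p = k - 1
    · rw [h1, Equiv.swap_apply_left]
      simp only [Fin.lt_def, hv]
      congr 1
      apply propext; omega
    by_cases h2 : p = k
    · rw [h2, Equiv.swap_apply_right]
      simp only [Fin.lt_def, hv]
      congr 1
      apply propext; omega
    · rw [Equiv.swap_apply_of_ne_of_ne h1 h2]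

theorem fin_sub_one_ne {N : ℕ} (hN : 0 < N) (k : Fin (N+1)) : k - 1 ≠ k := by
  by_cases hk : k = 0
  · subst hk; rw [fin_zero_sub_one]
    intro h
    have := congrArg Fin.val h
    simp at this; omega
  · intro h
    have h1 := fin_sub_one_val k hk
    rw [h] at h1
    have hk0 : k.val ≠ 0 := fun hh => hk (Fin.ext hh)
    omega

theorem flipA_flipA {N : ℕ} (k : Fin (N+1)) (T : Alc N) : flipA k (flipA k T) = T := by
  apply Prod.ext
  · funext i
    simp only [flipA, Equiv.trans_apply]
    by_cases hk : k = 0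
    · subst hk
      simp only [fin_zero_sub_one, if_true]
      obtain ⟨p, hp⟩ : ∃ p, T.2 i = p := ⟨_, rfl⟩
      simp only [hp]
      by_cases h1 : p = 0
      · subst h1
        simp [Equiv.swap_apply_right]
        by_cases h : N = 0 
        · subst h; simp
        · simp [h]
          
      by_cases h2 : p = Fin.last N
      · subst h2
        simp [Equiv.swap_apply_left]
        by_cases h : N = 0 
        · subst h; simp
        · simp [h]
      · simp [Equiv.swap_apply_of_ne_of_ne h2 h1, h1, h2]
    · simp [hk]
  · ext i
    simp [flipA]

theorem flip_ne {N : ℕ} (hN : 0 < N) (k : Fin (N+1)) (T : Alc N) : flipA k T ≠ T := by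
  intro h
  have h2 := congrArg Prod.snd h
  have h3 := congrArg (fun e : Equiv.Perm (Fin (N+1)) => e (T.2.symm k)) h2
  simp [flipA] at h3
  exact fin_sub_one_ne hN k (by simpa using h3)

theorem flip_sum {N : ℕ} (k : Fin (N+1)) (T : Alc N) : ∑ i, (flipA k T).1 i = ∑ i, T.1 i := by
  simp only [flipA]
  rw [Finset.sum_add_distrib]
  by_cases hk : k = 0
  · simp only [hk, if_true, Finset.sum_sub_distrib]
    have h : ∀ q : Fin (N+1), (∑ i, if T.2 i = q then (1:ℤ) else 0) = 1 := by
      intro q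
      rw [Equiv.sum_comp T.2 (fun p => if p = q then (1:ℤ) else 0)]
      simp
    rw [h, h]; simp
  · simp [hk]

theorem vtx_sum {N : ℕ} (k : Fin (N+1)) (T : Alc N) : ∑ i, vtx T k i = ∑ i, T.1 i + k.val := by
  simp only [vtx]
  rw [Finset.sum_add_distrib, Equiv.sum_comp T.2 (fun p => if p < k then (1:ℤ) else 0)]
  congr 1
  rw [Finset.sum_ite]
  simp only [Finset.sum_const_zero, add_zero, Finset.sum_const, nsmul_eq_mul, mul_one]
  have : (Finset.univ.filter (fun x : Fin (N+1) => x < k)) = Finset.Iio k := by ext; simp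
  rw [this, Fin.card_Iio]

end Sperner

section Sperner2

theorem vtx_inj {N : ℕ} (T : Alc N) : Function.Injective (vtx T) := by
  intro k l h
  have h1 := vtx_sum k T
  have h2 := vtx_sum l T
  rw [h] at h1
  apply Fin.ext
  have : (k.val : ℤ) = l.val := by linarith
  exact_mod_cast this

open Classical in
/-- Indicator of a fully labelled alcove. -/
noncomputable def fullI {N : ℕ} (lab : (Fin (N+1) → ℤ) → Fin (N+1)) (T : Alc N) : ZMod 2 :=
  if Function.Surjective (fun k => lab (vtx T k)) then 1 else 0

theorem box_finite {N : ℕ} (lo hi : Fin (N+1) → ℤ) :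
    {T : Alc N | ∀ i, lo i ≤ T.1 i ∧ T.1 i ≤ hi i}.Finite := by
  have h : (Set.Icc lo hi ×ˢ (Set.univ : Set (Equiv.Perm (Fin (N+1))))).Finite :=
    (Set.finite_Icc lo hi).prod Set.finite_univ
  refine h.subset ?_
  intro T hT
  refine ⟨⟨fun i => (hT i).1, fun i => (hT i).2⟩, trivial⟩

theorem star_finite {N : ℕ} (y : Fin (N+1) → ℤ) :
    {T : Alc N | ∑ i, T.1 i = 0 ∧ ∃ k, vtx T k = y}.Finite := by
  refine (box_finite (fun i => y i - 1) y).subset ?_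
  rintro T ⟨_, k, hk⟩ i
  have := congrFun hk i
  simp only [vtx] at this
  split_ifs at this <;> constructor <;> linarith

theorem star_parity {N : ℕ} (lab : (Fin (N+1) → ℤ) → Fin (N+1)) (y : Fin (N+1) → ℤ)
    (b : Fin (N+1)) (hab : lab y ≠ b) :
    ∑ T ∈ (star_finite y).toFinset, (fullI lab T + fullI (Function.update lab y b) T) = 0 := by
  classical
  have hN : 0 < N := by
    rcases Nat.eq_zero_or_pos N with h | h
    · subst h; exact absurd (Fin.ext (by omega)) hab
    · exact h
  set P : Alc N → Fin (N+1) → Prop := fun T k => vtx T k ≠ y ∧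
    ∀ c, c ≠ lab y → c ≠ b → ∃ l, l ≠ k ∧ vtx T l ≠ y ∧ lab (vtx T l) = c with hP
  have h1 : ∀ T ∈ (star_finite y).toFinset,
      (fullI lab T + fullI (Function.update lab y b) T) =
        ((Finset.univ.filter (fun k => P T k)).card : ZMod 2) := by
    intro T hT
    simp only [Set.Finite.mem_toFinset, Set.mem_ofPred_eq] at hT
    obtain ⟨hs, ky, hky⟩ := hT
    have hne : ∀ l, vtx T l ≠ y ↔ l ≠ ky := by
      intro l
      rw [← hky]
      exact (vtx_inj T).ne_iff
    have := comb_parity (fun k => lab (vtx T k)) ky (lab y) b hab (by simp [hky])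
    simp only [hP, hne, fullI]
    rw [this]
    congr 2
    congr 2
    funext k
    by_cases h : k = ky
    · subst h; simp [hky]
    · rw [Function.update_of_ne ((hne k).mpr h), Function.update_of_ne h]
  rw [Finset.sum_congr rfl h1]
  have h2 : ∑ T ∈ (star_finite y).toFinset, ((Finset.univ.filter (fun k => P T k)).card : ZMod 2)
      = ∑ q ∈ ((star_finite y).toFinset ×ˢ Finset.univ).filter (fun q => P q.1 q.2), 1 := by
    rw [Finset.sum_filter, Finset.sum_product]
    apply Finset.sum_congr rfl
    intro T _
    rw [← Finset.sum_filter]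
    simp
  rw [h2]
  refine Finset.sum_involution (fun q _ => (flipA q.2 q.1, q.2)) ?_ ?_ ?_ ?_
  · intro q _; decide
  · intro q _ _ h
    exact flip_ne hN q.2 q.1 (congrArg Prod.fst h)
  · rintro ⟨T, k⟩ hq
    simp only [Finset.mem_filter, Finset.mem_product, Set.Finite.mem_toFinset, Set.mem_ofPred_eq,
      Finset.mem_univ, and_true] at hq ⊢
    obtain ⟨⟨hs, ky, hky⟩, hp⟩ := hq
    have hk : ky ≠ k := by
      rintro rfl; exact hp.1 hky
    refine ⟨⟨by rw [flip_sum]; exact hs, ky, by rw [vtx_flip T k ky hk]; exact hky⟩, ?_⟩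
    refine ⟨?_, ?_⟩
    · rw [← hky, ← vtx_flip T k ky hk]
      exact fun h => hk (vtx_inj _ h).symm
    · intro c hc hc'
      obtain ⟨l, e1, e2, e3⟩ := hp.2 c hc hc'
      exact ⟨l, e1, by rw [vtx_flip T k l e1]; exact e2, by rw [vtx_flip T k l e1]; exact e3⟩
  · rintro ⟨T, k⟩ _
    simp [flipA_flipA]

/-- Labels only on nearly maximal coordinates. -/
def GoodLab {N : ℕ} (M : ℤ) (lab : (Fin (N+1) → ℤ) → Fin (N+1)) : Prop :=
  ∀ (x : Fin (N+1) → ℤ) (j : Fin (N+1)), x j ≤ x (lab x) + M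

theorem full_bound {N : ℕ} {M : ℤ} {lab : (Fin (N+1) → ℤ) → Fin (N+1)} (hg : GoodLab M lab)
    (T : Alc N) (h0 : ∑ i, T.1 i = 0) (hs : Function.Surjective (fun k => lab (vtx T k))) :
    ∀ i, -(M+1) ≤ T.1 i ∧ T.1 i ≤ M + 1 := by
  have key : ∀ i j, T.1 j ≤ T.1 i + (M + 1) := by
    intro i j
    obtain ⟨k, hk⟩ := hs i
    have := hg (vtx T k) j
    simp only at hk
    rw [hk] at this
    simp only [vtx] at this
    split_ifs at this <;> linarith
  intro i
  constructor
  · by_contra h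
    push Not at h
    have : ∑ j, T.1 j < ∑ j : Fin (N+1), (0:ℤ) :=
      Finset.sum_lt_sum_of_nonempty ⟨i, Finset.mem_univ i⟩ (fun j _ => by linarith [key i j])
    simp [h0] at this
  · by_contra h
    push Not at h
    have : ∑ j : Fin (N+1), (0:ℤ) < ∑ j, T.1 j :=
      Finset.sum_lt_sum_of_nonempty ⟨i, Finset.mem_univ i⟩ (fun j _ => by linarith [key j i])
    simp [h0] at this

theorem region_finite (N : ℕ) (M : ℤ) :
    {T : Alc N | (∀ i, -(M+1) ≤ T.1 i ∧ T.1 i ≤ M + 1) ∧ ∑ i, T.1 i = 0}.Finite :=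
  (box_finite (fun _ => -(M+1)) (fun _ => M+1)).subset (fun _ hT => hT.1)

theorem count_step {N : ℕ} {M : ℤ} (lab : (Fin (N+1) → ℤ) → Fin (N+1)) (hg : GoodLab M lab)
    (y : Fin (N+1) → ℤ) (b : Fin (N+1)) (hg' : GoodLab M (Function.update lab y b)) :
    ∑ T ∈ (region_finite N M).toFinset, fullI lab T =
      ∑ T ∈ (region_finite N M).toFinset, fullI (Function.update lab y b) T := by
  classical
  by_cases hab : lab y = b
  · rw [← hab, Function.update_eq_self]
  set B := (region_finite N M).toFinset with hB
  set A := (star_finite y).toFinset with hA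
  have ext : ∀ l : (Fin (N+1) → ℤ) → Fin (N+1), GoodLab M l →
      ∑ T ∈ B, fullI l T = ∑ T ∈ A, fullI l T + ∑ T ∈ B \ A, fullI l T := by
    intro l hl
    have : ∑ T ∈ B, fullI l T = ∑ T ∈ A ∪ B, fullI l T := by
      apply Finset.sum_subset Finset.subset_union_right
      intro T hT hTB
      have hTA : T ∈ A := by
        rcases Finset.mem_union.mp hT with h | h
        · exact h
        · exact absurd h hTB
      simp only [hA, Set.Finite.mem_toFinset, Set.mem_ofPred_eq] at hTA
      unfold fullI
      rw [if_neg]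
      intro hs
      apply hTB
      simp only [hB, Set.Finite.mem_toFinset, Set.mem_ofPred_eq]
      exact ⟨full_bound hl T hTA.1 hs, hTA.1⟩
    rw [this, ← Finset.union_sdiff_self_eq_union, Finset.sum_union Finset.disjoint_sdiff]
  rw [ext _ hg, ext _ hg']
  have h1 : ∑ T ∈ B \ A, fullI lab T = ∑ T ∈ B \ A, fullI (Function.update lab y b) T := by
    apply Finset.sum_congr rfl
    intro T hT
    simp only [hA, hB, Finset.mem_sdiff, Set.Finite.mem_toFinset, Set.mem_ofPred_eq] at hT
    have : ∀ k, vtx T k ≠ y := fun k hk => hT.2 ⟨hT.1.2, k, hk⟩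
    unfold fullI
    simp only [Function.update_of_ne (this _)]
  rw [h1]
  congr 1
  have h2 := star_parity lab y b hab
  rw [Finset.sum_add_distrib] at h2
  have h3 : ∀ p q : ZMod 2, p + q = 0 → p = q := by decide
  exact h3 _ _ h2

/-- First index of a maximal coordinate. -/
theorem exists_first_max {N : ℕ} (x : Fin (N+1) → ℤ) :
    ∃ i, (∀ j, x j ≤ x i) ∧ ∀ j, j < i → x j < x i := by
  classical
  obtain ⟨i0, _, hi0⟩ := Finset.exists_max_image Finset.univ x Finset.univ_nonempty
  have hne : (Finset.univ.filter (fun i => ∀ j, x j ≤ x i)).Nonempty :=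
    ⟨i0, by simp; exact fun j => hi0 j (Finset.mem_univ j)⟩
  refine ⟨(Finset.univ.filter (fun i => ∀ j, x j ≤ x i)).min' hne, ?_, ?_⟩
  · have := Finset.min'_mem _ hne
    simpa using this
  · intro j hj
    have hm := Finset.min'_mem _ hne
    simp only [Finset.mem_filter, Finset.mem_univ, true_and] at hm
    refine lt_of_le_of_ne (hm j) ?_
    intro he
    have : j ∈ Finset.univ.filter (fun i => ∀ j, x j ≤ x i) := by
      simp only [Finset.mem_filter, Finset.mem_univ, true_and]
      intro l; rw [he]; exact hm l
    exact absurd (Finset.min'_le _ j this) (not_le.mpr hj)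

noncomputable def lab0 {N : ℕ} (x : Fin (N+1) → ℤ) : Fin (N+1) := (exists_first_max x).choose

theorem lab0_spec {N : ℕ} (x : Fin (N+1) → ℤ) :
    (∀ j, x j ≤ x (lab0 x)) ∧ ∀ j, j < lab0 x → x j < x (lab0 x) :=
  (exists_first_max x).choose_spec

theorem lab0_eq {N : ℕ} (x : Fin (N+1) → ℤ) (i : Fin (N+1)) (h1 : ∀ j, x j ≤ x i)
    (h2 : ∀ j, j < i → x j < x i) : lab0 x = i := by
  obtain ⟨h3, h4⟩ := lab0_spec x
  rcases lt_trichotomy (lab0 x) i with h | h | h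
  · have := h2 _ h; have := h3 i; omega
  · exact h
  · have := h4 _ h; have := h1 (lab0 x); omega

theorem lab0_full {N : ℕ} :
    Function.Surjective (fun k => lab0 (vtx ((fun _ => 0, Fin.revPerm) : Alc N) k)) := by
  intro i
  by_cases hi : i = 0
  · refine ⟨0, ?_⟩
    apply lab0_eq
    · intro j; simp [vtx]
    · intro j hj; subst hi; exact absurd hj (Fin.not_lt_zero j)
  · have hi0 : i.val ≠ 0 := fun h => hi (Fin.ext h)
    refine ⟨⟨N + 1 - i.val, by omega⟩, ?_⟩
    apply lab0_eq
    · intro j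
      simp only [vtx, Fin.revPerm_apply, Fin.lt_def, Fin.val_rev]
      rw [if_pos (show N + 1 - (i.val + 1) < N + 1 - i.val by have := i.2; omega)]
      split_ifs <;> simp
    · intro j hj
      simp only [vtx, Fin.revPerm_apply, Fin.lt_def, Fin.val_rev]
      rw [if_pos (show N + 1 - (i.val + 1) < N + 1 - i.val by have := i.2; omega), if_neg]
      · simp
      · have := Fin.lt_def.mp hj
        have := i.2
        omega

theorem lab0_unique {N : ℕ} (T : Alc N) (h0 : ∑ i, T.1 i = 0)
    (hs : Function.Surjective (fun k => lab0 (vtx T k))) : T = (fun _ => 0, Fin.revPerm) := by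
  have key : ∀ i j, T.1 j ≤ T.1 i + 1 := by
    intro i j
    obtain ⟨k, hk⟩ := hs i
    have := (lab0_spec (vtx T k)).1 j
    simp only at hk
    rw [hk] at this
    simp only [vtx] at this
    split_ifs at this <;> linarith
  obtain ⟨i0, _, hi0⟩ := Finset.exists_min_image Finset.univ T.1 Finset.univ_nonempty
  have hx : ∀ i, T.1 i = 0 := by
    have hlow : T.1 i0 = 0 := by
      apply le_antisymm
      · by_contra h
        push Not at h
        have : ∑ j : Fin (N+1), (0:ℤ) < ∑ j, T.1 j :=
          Finset.sum_lt_sum_of_nonempty ⟨i0, Finset.mem_univ _⟩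
            (fun j _ => by linarith [hi0 j (Finset.mem_univ _)])
        simp [h0] at this
      · by_contra h
        push Not at h
        have : ∑ j, T.1 j < ∑ j : Fin (N+1), (0:ℤ) :=
          Finset.sum_lt_sum (fun j _ => by linarith [key i0 j]) ⟨i0, Finset.mem_univ _, h⟩
        simp [h0] at this
    have hnn : ∀ i ∈ Finset.univ, 0 ≤ T.1 i := fun i _ => by
      rw [← hlow]; exact hi0 i (Finset.mem_univ _)
    intro i
    exact (Finset.sum_eq_zero_iff_of_nonneg hnn).mp h0 i (Finset.mem_univ _)
  have hanti : ∀ i j, j < i → T.2 i < T.2 j := by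
    intro i j hji
    obtain ⟨k, hk⟩ := hs i
    obtain ⟨h1, h2⟩ := lab0_spec (vtx T k)
    simp only at hk
    rw [hk] at h1 h2
    have h3 := h2 j hji
    simp only [vtx, hx, zero_add] at h3
    by_cases hi : T.2 i < k
    · rw [if_pos hi] at h3
      by_cases hj : T.2 j < k
      · rw [if_pos hj] at h3; omega
      · exact lt_of_lt_of_le hi (not_lt.mp hj)
    · rw [if_neg hi] at h3
      split_ifs at h3 <;> omega
  apply Prod.ext
  · funext i; exact hx i
  · have hmono : StrictMono (fun i => Fin.rev (T.2 i)) := by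
      intro j i h
      exact Fin.rev_lt_rev.mpr (hanti i j h)
    have hsurj : Set.range (fun i => Fin.rev (T.2 i)) = Set.range (id : Fin (N+1) → Fin (N+1)) := by
      have : Function.Surjective (fun i => Fin.rev (T.2 i)) :=
        Fin.rev_surjective.comp T.2.surjective
      rw [this.range_eq, Set.range_id]
    have := (StrictMono.range_inj hmono strictMono_id).mp hsurj
    ext i
    have h := congrFun this i
    simp only [id] at h
    have h' : T.2 i = Fin.rev i := by rw [← h, Fin.rev_rev, h]
    simp [h']

theorem lab0_count {N : ℕ} {M : ℤ} (hM : 0 ≤ M) :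
    ∑ T ∈ (region_finite N M).toFinset, fullI lab0 T = 1 := by
  classical
  rw [Finset.sum_eq_single ((fun _ => 0, Fin.revPerm) : Alc N)]
  · unfold fullI; rw [if_pos lab0_full]
  · intro T hT hne
    simp only [Set.Finite.mem_toFinset, Set.mem_ofPred_eq] at hT
    unfold fullI; rw [if_neg]
    intro hs; exact hne (lab0_unique T hT.2 hs)
  · intro h
    exfalso; apply h
    simp only [Set.Finite.mem_toFinset, Set.mem_ofPred_eq]
    refine ⟨fun i => ⟨by linarith, by linarith⟩, by simp⟩

theorem sperner {N : ℕ} {M : ℤ} (hM : 0 ≤ M) (lab : (Fin (N+1) → ℤ) → Fin (N+1))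
    (hg : GoodLab M lab) :
    ∃ T : Alc N, ∑ i, T.1 i = 0 ∧ Function.Surjective (fun k => lab (vtx T k)) := by
  classical
  have hmix : ∀ D : Finset (Fin (N+1) → ℤ),
      ∑ T ∈ (region_finite N M).toFinset, fullI (fun x => if x ∈ D then lab x else lab0 x) T = 1 := by
    have hgm : ∀ D : Finset (Fin (N+1) → ℤ), GoodLab M (fun x => if x ∈ D then lab x else lab0 x) := by
      intro D x j
      by_cases hx : x ∈ D
      · simp only [hx, if_true]; exact hg x j
      · simp only [hx, if_false]; linarith [(lab0_spec x).1 j]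
    intro D
    induction D using Finset.induction_on with
    | empty => simpa using lab0_count hM
    | insert y D hy ih =>
      have hupd : (fun x => if x ∈ insert y D then lab x else lab0 x) =
          Function.update (fun x => if x ∈ D then lab x else lab0 x) y (lab y) := by
        funext x
        by_cases hx : x = y
        · subst hx; simp
        · rw [Function.update_of_ne hx]; simp [hx]
      have hg2 := hgm (insert y D)
      rw [hupd] at hg2 ⊢
      rw [← count_step _ (hgm D) y (lab y) hg2]
      exact ih
  set W := (region_finite N M).toFinset.biUnion (fun T => Finset.univ.image (vtx T)) with hW
  have h1 := hmix W
  by_contra hno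
  push Not at hno
  rw [Finset.sum_eq_zero] at h1
  · exact absurd h1 (by decide)
  · intro T hT
    have hv : ∀ k, vtx T k ∈ W := by
      intro k
      rw [hW, Finset.mem_biUnion]
      exact ⟨T, hT, Finset.mem_image_of_mem _ (Finset.mem_univ k)⟩
    simp only [Set.Finite.mem_toFinset, Set.mem_ofPred_eq] at hT
    unfold fullI
    simp only [hv, if_true]
    rw [if_neg (hno T hT.2)]

end Sperner2

section KKMsec

theorem kkm {N : ℕ} (D : Fin (N+1) → Set (Fin (N+1) → ℝ)) (hc : ∀ i, IsClosed (D i)) (R : ℝ)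
    (hR : 0 ≤ R) (hcov : ∀ z : Fin (N+1) → ℝ, ∃ i, z ∈ D i ∧ ∀ j, z j ≤ z i + R) :
    ∃ z : Fin (N+1) → ℝ, (∀ i, z ∈ D i) ∧ ∀ j, |z j| ≤ R + 2 := by
  have step : ∀ s : ℕ, ∃ z : Fin (N+1) → ℝ, (∀ j, |z j| ≤ R + 2) ∧
      ∀ i, ∃ d ∈ D i, dist z d ≤ 1 / ((s:ℝ) + 1) := by
    intro s
    set δ : ℝ := 1 / ((s:ℝ) + 1) with hδ
    have hs : (0:ℝ) < (s:ℝ) + 1 := by positivity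
    have hδ0 : 0 < δ := by positivity
    have hδ1 : δ ≤ 1 := by
      rw [hδ, div_le_one hs]
      have : (0:ℝ) ≤ s := Nat.cast_nonneg s
      linarith
    choose lab hlab using fun x : Fin (N+1) → ℤ => hcov (fun i => δ * (x i : ℝ))
    set M : ℤ := ⌈R * ((s:ℝ)+1)⌉ with hM
    have hM0 : 0 ≤ M := Int.ceil_nonneg (by positivity)
    have hδs : δ * ((s:ℝ)+1) = 1 := by rw [hδ]; field_simp
    have hM1 : R * ((s:ℝ)+1) ≤ M := Int.le_ceil _
    have hM2 : (M:ℝ) < R * ((s:ℝ)+1) + 1 := Int.ceil_lt_add_one _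
    have hg : GoodLab M lab := by
      intro x j
      have h := (hlab x).2 j
      have h1 : (x j : ℝ) ≤ x (lab x) + R * ((s:ℝ)+1) := by
        have h2 := mul_le_mul_of_nonneg_right h hs.le
        have e1 : δ * (x j : ℝ) * ((s:ℝ)+1) = x j := by
          rw [mul_right_comm, hδs, one_mul]
        have e2 : (δ * (x (lab x) : ℝ) + R) * ((s:ℝ)+1) = x (lab x) + R * ((s:ℝ)+1) := by
          rw [add_mul, mul_right_comm, hδs, one_mul]
        linarith
      have : (x j : ℝ) ≤ ((x (lab x) + M : ℤ) : ℝ) := by push_cast; linarith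
      exact_mod_cast this
    obtain ⟨T, h0, hsur⟩ := sperner hM0 lab hg
    have hb := full_bound hg T h0 hsur
    refine ⟨fun i => δ * (T.1 i : ℝ), ?_, ?_⟩
    · intro j
      obtain ⟨l, u⟩ := hb j
      have l' : -((M:ℝ)+1) ≤ T.1 j := by exact_mod_cast l
      have u' : (T.1 j : ℝ) ≤ (M:ℝ)+1 := by exact_mod_cast u
      have hab : |(T.1 j : ℝ)| ≤ M + 1 := abs_le.mpr ⟨l', u'⟩
      rw [abs_mul, abs_of_pos hδ0]
      calc δ * |(T.1 j : ℝ)| ≤ δ * (R * ((s:ℝ)+1) + 2) := by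
            apply mul_le_mul_of_nonneg_left _ hδ0.le; linarith
        _ = R * (δ * ((s:ℝ)+1)) + 2 * δ := by ring
        _ ≤ R + 2 := by rw [hδs]; linarith
    · intro i
      obtain ⟨k, hk⟩ := hsur i
      simp only at hk
      refine ⟨fun j => δ * (vtx T k j : ℝ), ?_, ?_⟩
      · have := (hlab (vtx T k)).1
        rw [hk] at this
        exact this
      · rw [dist_pi_le_iff hδ0.le]
        intro j
        rw [Real.dist_eq]
        simp only [vtx]
        split_ifs
        · push_cast
          rw [show δ * (T.1 j : ℝ) - δ * ((T.1 j : ℝ) + 1) = -δ by ring, abs_neg, abs_of_pos hδ0]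
        · push_cast; simp; exact hδ0.le
  choose z hz1 hz2 using step
  have hK : IsCompact (Set.Icc (fun _ : Fin (N+1) => -(R+2)) (fun _ => R+2)) := isCompact_Icc
  have hzK : ∀ s, z s ∈ Set.Icc (fun _ : Fin (N+1) => -(R+2)) (fun _ => R+2) := by
    intro s
    exact ⟨fun j => (abs_le.mp (hz1 s j)).1, fun j => (abs_le.mp (hz1 s j)).2⟩
  obtain ⟨z0, hz0, φ, hφ, hlim⟩ := hK.tendsto_subseq hzK
  refine ⟨z0, fun i => ?_, fun j => abs_le.mpr ⟨hz0.1 j, hz0.2 j⟩⟩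
  have hne : (D i).Nonempty := by
    obtain ⟨d, hd, _⟩ := hz2 0 i
    exact ⟨d, hd⟩
  rw [(hc i).mem_iff_infDist_zero hne]
  apply le_antisymm _ Metric.infDist_nonneg
  have h1 : Filter.Tendsto (fun s => Metric.infDist (z (φ s)) (D i)) Filter.atTop
      (nhds (Metric.infDist z0 (D i))) :=
    ((Metric.continuous_infDist_pt (D i)).tendsto z0).comp hlim
  have h2 : Filter.Tendsto (fun s => 1 / (((φ s : ℕ):ℝ) + 1)) Filter.atTop (nhds 0) :=
    (tendsto_one_div_add_atTop_nhds_zero_nat (𝕜 := ℝ)).comp hφ.tendsto_atTop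
  refine le_of_tendsto_of_tendsto' h1 h2 (fun s => ?_)
  obtain ⟨d, hd, hd2⟩ := hz2 (φ s) i
  exact (Metric.infDist_le_dist_of_mem hd).trans hd2

end KKMsec

section Market

/-- Weighted value of an item, with logarithmic weights. -/
noncomputable def pr {n m : ℕ} (u : Fin n → Fin m → ℝ) (z : Fin n → ℝ) (i : Fin n) (j : Fin m) : ℝ :=
  Real.exp (z i) * u i j

def Tie {n m : ℕ} (u : Fin n → Fin m → ℝ) (z : Fin n → ℝ) (i : Fin n) (j : Fin m) : Prop :=
  ∀ k, pr u z k j ≤ pr u z i j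

def Cons {n m : ℕ} (u : Fin n → Fin m → ℝ) (z : Fin n → ℝ) (a : Fin m → Fin n) : Prop :=
  ∀ j, Tie u z (a j) j

noncomputable def pval {n m : ℕ} (u : Fin n → Fin m → ℝ) (z : Fin n → ℝ) (a : Fin m → Fin n)
    (k : Fin n) : ℝ := ∑ j, if a j = k then pr u z k j else 0

def Types {n m : ℕ} (u : Fin n → Fin m → ℝ) : Prop :=
  ∀ j, (∀ i, u i j < 0) ∨ ((∀ i, 0 ≤ u i j) ∧ ∃ i, 0 < u i j)

def Bdd {n m : ℕ} (u : Fin n → Fin m → ℝ) (c C : ℝ) : Prop :=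
  ∀ i j, |u i j| ≤ C ∧ (u i j ≠ 0 → c ≤ |u i j|)

def Dset {n m : ℕ} (u : Fin n → Fin m → ℝ) (κ : ℝ) (i : Fin n) : Set (Fin n → ℝ) :=
  {z | ∃ a, Cons u z a ∧ ∀ k, pval u z a k ≤ pval u z a i} ∪
  {z | (∀ j, u i j ≤ 0) ∧ ∃ k, z k + κ ≤ z i}

def bundle {n m : ℕ} (a : Fin m → Fin n) (i : Fin n) : Finset (Fin m) :=
  Finset.univ.filter (fun j => a j = i)

theorem continuous_pr {n m : ℕ} (u : Fin n → Fin m → ℝ) (i : Fin n) (j : Fin m) :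
    Continuous (fun z => pr u z i j) := by
  unfold pr; fun_prop

theorem continuous_pval {n m : ℕ} (u : Fin n → Fin m → ℝ) (a : Fin m → Fin n) (i : Fin n) :
    Continuous (fun z => pval u z a i) := by
  unfold pval
  apply continuous_finsetSum
  intro j _
  split_ifs
  · exact continuous_pr u i j
  · exact continuous_const

theorem closed_cons {n m : ℕ} (u : Fin n → Fin m → ℝ) (a : Fin m → Fin n) :
    IsClosed {z | Cons u z a} := by
  have : {z | Cons u z a} = ⋂ j, ⋂ k, {z | pr u z k j ≤ pr u z (a j) j} := by
    ext z; simp [Cons, Tie]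
  rw [this]
  exact isClosed_iInter fun j => isClosed_iInter fun k =>
    isClosed_le (continuous_pr u k j) (continuous_pr u (a j) j)

theorem closed_Dset {n m : ℕ} (u : Fin n → Fin m → ℝ) (κ : ℝ) (i : Fin n) :
    IsClosed (Dset u κ i) := by
  apply IsClosed.union
  · have : {z | ∃ a, Cons u z a ∧ ∀ k, pval u z a k ≤ pval u z a i} =
        ⋃ a : Fin m → Fin n, ({z | Cons u z a} ∩ ⋂ k, {z | pval u z a k ≤ pval u z a i}) := by
      ext z; simp
    rw [this]
    apply isClosed_iUnion_of_finite
    intro a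
    exact (closed_cons u a).inter (isClosed_iInter fun k =>
      isClosed_le (continuous_pval u a k) (continuous_pval u a i))
  · by_cases h : ∀ j, u i j ≤ 0
    · have : {z : Fin n → ℝ | (∀ j, u i j ≤ 0) ∧ ∃ k, z k + κ ≤ z i} =
          ⋃ k : Fin n, {z | z k + κ ≤ z i} := by
        ext z; simp [h]
      rw [this]
      apply isClosed_iUnion_of_finite
      intro k
      exact isClosed_le (by fun_prop) (by fun_prop)
    · have : {z : Fin n → ℝ | (∀ j, u i j ≤ 0) ∧ ∃ k, z k + κ ≤ z i} = ∅ := by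
        ext z; simp [h]
      rw [this]; exact isClosed_empty

/-- A chore tie forces a bounded weight ratio. -/
theorem chore_ratio {n m : ℕ} {u : Fin n → Fin m → ℝ} {c C : ℝ}
    (hb : Bdd u c C) {z : Fin n → ℝ} {h : Fin n} {j : Fin m} (hch : ∀ i, u i j < 0)
    (ht : Tie u z h j) (k : Fin n) : Real.exp (z h) * c ≤ Real.exp (z k) * C := by
  have h1 := ht k
  unfold pr at h1
  have h2 := (hb h j).2 (hch h).ne
  have h3 := (hb k j).1
  rw [abs_of_neg (hch h)] at h2
  rw [abs_of_neg (hch k)] at h3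
  have e1 := Real.exp_pos (z h)
  have e2 := Real.exp_pos (z k)
  nlinarith

theorem exists_cons {N m : ℕ} (u : Fin (N+1) → Fin m → ℝ) (z : Fin (N+1) → ℝ) :
    ∃ a, Cons u z a := by
  have : ∀ j, ∃ i, Tie u z i j := by
    intro j
    obtain ⟨i, _, hi⟩ := Finset.exists_max_image Finset.univ (fun i => pr u z i j)
      Finset.univ_nonempty
    exact ⟨i, fun k => hi k (Finset.mem_univ k)⟩
  choose a ha using this
  exact ⟨a, ha⟩

theorem cover {N m : ℕ} {u : Fin (N+1) → Fin m → ℝ} (hT : Types u) {c C κ R : ℝ}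
    (hc : 0 < c) (hC : 1 ≤ C) (hb : Bdd u c C)
    (hκ : C ^ 2 < c ^ 2 * Real.exp κ) (hR0 : 0 ≤ R) (hRκ : κ ≤ R) (hR : m * C ≤ c * Real.exp R)
    (z : Fin (N+1) → ℝ) : ∃ i, z ∈ Dset u κ i ∧ ∀ j, z j ≤ z i + R := by
  obtain ⟨top, _, htop⟩ := Finset.exists_max_image Finset.univ z Finset.univ_nonempty
  obtain ⟨a, ha⟩ := exists_cons u z
  obtain ⟨r, _, hr⟩ := Finset.exists_max_image Finset.univ (fun k => pval u z a k)
    Finset.univ_nonempty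
  have hrD : z ∈ Dset u κ r := Or.inl ⟨a, ha, fun k => hr k (Finset.mem_univ k)⟩
  by_cases hgap : ∃ k, z k + κ ≤ z top
  · by_cases hZ : ∀ j, u top j ≤ 0
    · exact ⟨top, Or.inr ⟨hZ, hgap⟩, fun j => by linarith [htop j (Finset.mem_univ j)]⟩
    · push Not at hZ
      obtain ⟨j0, hj0⟩ := hZ
      obtain ⟨k, hk⟩ := hgap
      refine ⟨r, hrD, ?_⟩
      set h := a j0 with hh
      have hnn : ∀ i, 0 ≤ u i j0 := by
        rcases hT j0 with h1 | h1
        · exact absurd (h1 top) (not_lt.mpr hj0.le)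
        · exact h1.1
      have et := Real.exp_pos (z top)
      have eh := Real.exp_pos (z h)
      have er := Real.exp_pos (z r)
      have ek := Real.exp_pos (z k)
      have h1 : Real.exp (z top) * c ≤ pr u z h j0 := by
        refine le_trans ?_ (ha j0 top)
        unfold pr
        have := (hb top j0).2 hj0.ne'
        rw [abs_of_pos hj0] at this
        exact mul_le_mul_of_nonneg_left this et.le
      have h2 : Real.exp (z top) * c ≤ Real.exp (z h) * C := by
        refine h1.trans ?_
        unfold pr
        exact mul_le_mul_of_nonneg_left ((le_abs_self _).trans (hb h j0).1) eh.le
      have h3 : Real.exp (z k) * Real.exp κ ≤ Real.exp (z top) := by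
        rw [← Real.exp_add]; exact Real.exp_le_exp.mpr hk
      have hnoch : ∀ j, a j = h → ∀ i, 0 ≤ u i j := by
        intro j hj
        rcases hT j with hch | hgd
        · exfalso
          have h4 := chore_ratio hb hch (ha j) k
          rw [hj] at h4
          -- c² e^κ e^k ≤ c² e^top ≤ c C e^h ≤ C² e^k
          have s1 : c ^ 2 * Real.exp κ * Real.exp (z k) ≤ c ^ 2 * Real.exp (z top) := by
            have := mul_le_mul_of_nonneg_left h3 (sq_nonneg c)
            linarith
          have s2 : c ^ 2 * Real.exp (z top) ≤ c * (Real.exp (z h) * C) := by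
            have := mul_le_mul_of_nonneg_left h2 hc.le
            linarith
          have s3 : c * (Real.exp (z h) * C) ≤ C * (Real.exp (z k) * C) := by
            have := mul_le_mul_of_nonneg_left h4 (by linarith : (0:ℝ) ≤ C)
            linarith
          have s4 : C ^ 2 * Real.exp (z k) < c ^ 2 * Real.exp κ * Real.exp (z k) :=
            mul_lt_mul_of_pos_right hκ ek
          nlinarith
        · exact hgd.1
      have h5 : Real.exp (z top) * c ≤ pval u z a h := by
        refine h1.trans ?_
        unfold pval
        have := Finset.single_le_sum (f := fun j => if a j = h then pr u z h j else 0)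
          (s := Finset.univ) (fun j _ => by
            split_ifs with hj
            · exact mul_nonneg eh.le (hnoch j hj h)
            · exact le_rfl) (Finset.mem_univ j0)
        simpa [← hh] using this
      have h6 : pval u z a r ≤ Real.exp (z r) * (m * C) := by
        unfold pval
        have : ∑ j, (if a j = r then pr u z r j else 0) ≤ ∑ _j : Fin m, Real.exp (z r) * C := by
          apply Finset.sum_le_sum
          intro j _
          split_ifs
          · unfold pr
            exact mul_le_mul_of_nonneg_left ((le_abs_self _).trans (hb r j).1) er.le
          · exact mul_nonneg er.le (by linarith)
        refine this.trans (le_of_eq ?_)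
        simp; ring
      have h7 : Real.exp (z top) * c ≤ Real.exp (z r) * Real.exp R * c := by
        calc _ ≤ _ := h5
          _ ≤ _ := hr h (Finset.mem_univ h)
          _ ≤ _ := h6
          _ ≤ Real.exp (z r) * (c * Real.exp R) := mul_le_mul_of_nonneg_left hR er.le
          _ = _ := by ring
      have h8 := le_of_mul_le_mul_right h7 hc
      rw [← Real.exp_add, Real.exp_le_exp] at h8
      intro j
      exact (htop j (Finset.mem_univ j)).trans h8
  · push Not at hgap
    refine ⟨r, hrD, fun j => ?_⟩
    have := hgap r
    have := htop j (Finset.mem_univ j)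
    linarith

end Market

section Local

/-- The tie graph has an elimination order. -/
def Elim {n m : ℕ} (u : Fin n → Fin m → ℝ) (z : Fin n → ℝ) : Prop :=
  ∃ rank : Fin n → ℕ, Function.Injective rank ∧ ∀ k j j',
    Tie u z k j → (∃ k', rank k < rank k' ∧ Tie u z k' j) →
    Tie u z k j' → (∃ k', rank k < rank k' ∧ Tie u z k' j') → j = j'

theorem sum_update {n m : ℕ} {β : Type*} [AddCommGroup β] (F : Fin m → Fin n → β)
    (a : Fin m → Fin n) (j : Fin m) (k : Fin n) :
    ∑ i, F i (Function.update a j k i) = ∑ i, F i (a i) + F j k - F j (a j) := by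
  rw [← Finset.add_sum_erase _ _ (Finset.mem_univ j),
    ← Finset.add_sum_erase (s := Finset.univ) (f := fun i => F i (a i)) (Finset.mem_univ j)]
  rw [Function.update_self]
  have : ∑ x ∈ Finset.univ.erase j, F x (Function.update a j k x) =
      ∑ x ∈ Finset.univ.erase j, F x (a x) := by
    apply Finset.sum_congr rfl
    intro x hx
    rw [Function.update_of_ne (Finset.ne_of_mem_erase hx)]
  rw [this]
  abel

theorem local_search {N m : ℕ} {u : Fin (N+1) → Fin m → ℝ} (hT : Types u) {c C κ : ℝ}
    (hc : 0 < c) (hb : Bdd u c C) (hκ0 : 0 < κ)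
    (hκ : C < c * Real.exp κ) {z : Fin (N+1) → ℝ} (hz : ∀ i, z ∈ Dset u κ i)
    (hE : Elim u z) : ∃ a, Cons u z a ∧ IEF1 u (bundle a) := by
  classical
  obtain ⟨rank, hinj, hrank⟩ := hE
  -- prices
  obtain ⟨a0, ha0⟩ := exists_cons u z
  set P : Fin m → ℝ := fun j => pr u z (a0 j) j with hP
  have hle : ∀ i j, pr u z i j ≤ P j := fun i j => ha0 j i
  have hTie : ∀ i j, Tie u z i j → pr u z i j = P j := fun i j h => le_antisymm (hle i j) (h _)
  have hsign : ∀ j, ((∀ i, u i j < 0) ∧ P j < 0) ∨ 0 < P j := by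
    intro j
    rcases hT j with h | ⟨_, i, hi⟩
    · left
      exact ⟨h, mul_neg_of_pos_of_neg (Real.exp_pos _) (h _)⟩
    · right
      exact lt_of_lt_of_le (mul_pos (Real.exp_pos _) hi) (hle i j)
  set V : (Fin m → Fin (N+1)) → Fin (N+1) → ℝ := fun a k => ∑ j, if a j = k then P j else 0 with hV
  have hpv : ∀ a, Cons u z a → ∀ k, pval u z a k = V a k := by
    intro a ha k
    simp only [pval, hV]
    apply Finset.sum_congr rfl
    intro j _
    split_ifs with h
    · rw [← h]; exact hTie _ _ (ha j)
    · rfl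
  set X : (Fin m → Fin (N+1)) → Fin (N+1) → Finset (Fin m) := fun a k =>
    Finset.univ.filter (fun j => Tie u z k j ∧ ((P j < 0 ∧ a j = k ∧ ∃ k', k' ≠ k ∧ Tie u z k' j) ∨
      (0 < P j ∧ a j ≠ k))) with hX
  set b : Fin (N+1) → ℝ := fun k => ∑ j, if Tie u z k j then
      (if 0 < P j then P j else if ∃ k', k' ≠ k ∧ Tie u z k' j then 0 else P j) else 0 with hbdef
  have hbX : ∀ a, Cons u z a → ∀ k, b k = V a k + ∑ j ∈ X a k, |P j| := by
    intro a ha k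
    simp only [hbdef, hV, hX]
    rw [Finset.sum_filter, ← Finset.sum_add_distrib]
    apply Finset.sum_congr rfl
    intro j _
    by_cases hk : Tie u z k j
    · rcases hsign j with ⟨_, hneg⟩ | hpos
      · have hnp : ¬ 0 < P j := not_lt.mpr hneg.le
        by_cases haj : a j = k
        · by_cases hsh : ∃ k', k' ≠ k ∧ Tie u z k' j
          · simp [hk, hneg, hnp, haj, hsh, abs_of_neg hneg]
          · simp [hk, hnp, haj, hsh]
        · have hsh : ∃ k', k' ≠ k ∧ Tie u z k' j := ⟨a j, haj, ha j⟩
          simp [hk, hnp, haj, hsh]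
      · have hnn : ¬ P j < 0 := not_lt.mpr hpos.le
        by_cases haj : a j = k
        · simp [hk, hpos, hnn, haj]
        · simp [hk, hpos, haj, abs_of_pos hpos]
    · have haj : a j ≠ k := fun h => hk (h ▸ ha j)
      simp [hk, haj]
  -- contented agents
  set Q : Fin (N+1) → Prop := fun i => (∀ j, u i j ≤ 0) ∧ ∃ k, z k + κ ≤ z i with hQ
  have hQtie : ∀ i, Q i → ∀ j, ¬ Tie u z i j := by
    rintro i ⟨h1, k, hk⟩ j ht
    rcases hsign j with ⟨hch, _⟩ | hpos
    · have h2 := chore_ratio hb hch ht k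
      have h3 : Real.exp (z k) * Real.exp κ ≤ Real.exp (z i) := by
        rw [← Real.exp_add]; exact Real.exp_le_exp.mpr hk
      have ek := Real.exp_pos (z k)
      have := mul_lt_mul_of_pos_left hκ ek
      nlinarith
    · rw [← hTie i j ht] at hpos
      have : pr u z i j ≤ 0 := mul_nonpos_of_nonneg_of_nonpos (Real.exp_pos _).le (h1 j)
      linarith
  have hLne : (Finset.univ.filter (fun i => ¬ Q i)).Nonempty := by
    obtain ⟨i, _, hi⟩ := Finset.exists_min_image Finset.univ z Finset.univ_nonempty
    refine ⟨i, ?_⟩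
    simp only [Finset.mem_filter, Finset.mem_univ, true_and]
    rintro ⟨_, k, hk⟩
    linarith [hi k (Finset.mem_univ k)]
  obtain ⟨s, hsL, hsmin⟩ := Finset.exists_min_image _ b hLne
  simp only [Finset.mem_filter, Finset.mem_univ, true_and] at hsL hsmin
  obtain ⟨a1, ha1, hrich⟩ : ∃ a, Cons u z a ∧ ∀ k, pval u z a k ≤ pval u z a s := by
    rcases hz s with h | h
    · exact h
    · exact absurd h hsL
  set t := V a1 s with ht
  have ht1 : ∀ k, V a1 k ≤ t := by
    intro k
    have := hrich k
    rwa [hpv a1 ha1, hpv a1 ha1] at this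
  have ht2 : ∀ k, ¬ Q k → t ≤ b k := by
    intro k hk
    refine le_trans ?_ (hsmin k hk)
    rw [hbX a1 ha1 s]
    have : 0 ≤ ∑ j ∈ X a1 s, |P j| := Finset.sum_nonneg (fun j _ => abs_nonneg _)
    linarith
  -- minimise the potential
  set Φ : (Fin m → Fin (N+1)) → ℤ := fun a =>
    ∑ j, if P j < 0 then (rank (a j) : ℤ) else -(rank (a j) : ℤ) with hΦ
  have hne : (Finset.univ.filter (fun a => Cons u z a ∧ ∀ k, V a k ≤ t)).Nonempty :=
    ⟨a1, by simp only [Finset.mem_filter, Finset.mem_univ, true_and]; exact ⟨ha1, ht1⟩⟩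
  obtain ⟨a, haS, hamin⟩ := Finset.exists_min_image _ Φ hne
  simp only [Finset.mem_filter, Finset.mem_univ, true_and] at haS hamin
  obtain ⟨ha, hat⟩ := haS
  -- values of updates
  have hVup : ∀ j k l, V (Function.update a j k) l =
      V a l + (if k = l then P j else 0) - (if a j = l then P j else 0) := by
    intro j k l
    exact sum_update (fun j i => if i = l then P j else 0) a j k
  have hΦup : ∀ j k, Φ (Function.update a j k) = Φ a +
      (if P j < 0 then (rank k : ℤ) else -(rank k : ℤ)) -
      (if P j < 0 then (rank (a j) : ℤ) else -(rank (a j) : ℤ)) := by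
    intro j k
    exact sum_update (fun j i => if P j < 0 then (rank i : ℤ) else -(rank i : ℤ)) a j k
  have hconsup : ∀ j k, Tie u z k j → Cons u z (Function.update a j k) := by
    intro j k hk j'
    by_cases h : j' = j
    · subst h; simpa using hk
    · rw [Function.update_of_ne h]; exact ha j'
  -- key claim
  have hkey : ∀ k, ¬ Q k → t ≤ V a k ∨ ∃ j ∈ X a k, t ≤ V a k + |P j| := by
    intro k hk
    by_contra hcon
    push Not at hcon
    obtain ⟨hlt, hall⟩ := hcon
    have hbk := ht2 k hk
    rw [hbX a ha k] at hbk
    have htwo : ∃ j1 ∈ X a k, ∃ j2 ∈ X a k, j1 ≠ j2 := by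
      by_contra hno
      push Not at hno
      rcases Finset.eq_empty_or_nonempty (X a k) with he | ⟨j1, hj1⟩
      · rw [he] at hbk; simp at hbk; linarith
      · have : X a k = {j1} :=
          Finset.eq_singleton_iff_unique_mem.mpr ⟨hj1, fun j2 hj2 => (hno j1 hj1 j2 hj2).symm⟩
        rw [this, Finset.sum_singleton] at hbk
        linarith [hall j1 hj1]
    obtain ⟨j, hjX, hjlow⟩ : ∃ j ∈ X a k, ∀ k', Tie u z k' j → ¬ rank k < rank k' := by
      obtain ⟨j1, hj1, j2, hj2, hne⟩ := htwo
      by_contra hno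
      push Not at hno
      obtain ⟨k1, e1, e2⟩ := hno j1 hj1
      obtain ⟨k2, e3, e4⟩ := hno j2 hj2
      have m1 : Tie u z k j1 := by
        simp only [hX, Finset.mem_filter] at hj1; exact hj1.2.1
      have m2 : Tie u z k j2 := by
        simp only [hX, Finset.mem_filter] at hj2; exact hj2.2.1
      exact hne (hrank k j1 j2 m1 ⟨k1, e2, e1⟩ m2 ⟨k2, e4, e3⟩)
    have hjlt := hall j hjX
    have hjX' := hjX
    simp only [hX, Finset.mem_filter, Finset.mem_univ, true_and] at hjX'
    obtain ⟨htk, ⟨hneg, haj, k', hk'k, hk'⟩ | ⟨hpos, haj⟩⟩ := hjX'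
    · -- push the chore down
      have hrk : rank k' < rank k :=
        lt_of_le_of_ne (not_lt.mp (hjlow k' hk')) (fun h => hk'k (hinj h))
      have h1 : Φ a ≤ Φ (Function.update a j k') := by
        apply hamin _ ⟨hconsup j k' hk', ?_⟩
        intro l
        rw [hVup, haj]
        rw [abs_of_neg hneg] at hjlt
        have := hat l
        by_cases e1 : k' = l
        · have e2 : ¬ k = l := fun e => hk'k (e1.trans e.symm)
          rw [if_pos e1, if_neg e2]; linarith
        · rw [if_neg e1]
          by_cases e2 : k = l
          · rw [if_pos e2, ← e2]; linarith
          · rw [if_neg e2]; linarith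
      rw [hΦup, haj, if_pos hneg, if_pos hneg] at h1
      omega
    · -- pull the good up
      have hk' := ha j
      have hrk : rank (a j) < rank k :=
        lt_of_le_of_ne (not_lt.mp (hjlow _ hk')) (fun h => haj (hinj h))
      have h1 : Φ a ≤ Φ (Function.update a j k) := by
        apply hamin _ ⟨hconsup j k htk, ?_⟩
        intro l
        rw [hVup]
        rw [abs_of_pos hpos] at hjlt
        have := hat l
        by_cases e1 : k = l
        · have e2 : ¬ a j = l := fun e => haj (e.trans e1.symm)
          rw [if_pos e1, if_neg e2, ← e1]; linarith
        · rw [if_neg e1]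
          by_cases e2 : a j = l
          · rw [if_pos e2]; linarith
          · rw [if_neg e2]; linarith
      rw [hΦup, if_neg (not_lt.mpr hpos.le), if_neg (not_lt.mpr hpos.le)] at h1
      omega
  refine ⟨a, ha, ?_⟩
  intro k
  by_cases hk : Q k
  · refine ⟨∅, by simp, ?_⟩
    intro l
    have hemp : bundle a k = ∅ := by
      apply Finset.filter_eq_empty_iff.mpr
      intro j _ hj
      exact hQtie k hk j (hj ▸ ha j)
    have h1 : bval (u k) (bundle a l) ≤ 0 := Finset.sum_nonpos (fun j _ => hk.1 j)
    simpa [hemp, bval] using h1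
  · have ek := Real.exp_pos (z k)
    have hmul : ∀ S, Real.exp (z k) * bval (u k) S = ∑ j ∈ S, pr u z k j := by
      intro S; simp only [bval, pr, Finset.mul_sum]
    have hVb : ∀ l, V a l = ∑ j ∈ bundle a l, P j := by
      intro l; simp only [hV, bundle, Finset.sum_filter]
    have hown : ∑ j ∈ bundle a k, pr u z k j = V a k := by
      rw [hVb]
      apply Finset.sum_congr rfl
      intro j hj
      simp only [bundle, Finset.mem_filter, Finset.mem_univ, true_and] at hj
      exact hTie k j (hj ▸ ha j)
    have hS : ∃ S : Finset (Fin m), S.card ≤ 1 ∧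
        t ≤ ∑ j ∈ symmDiff (bundle a k) S, pr u z k j := by
      rcases hkey k hk with h | ⟨j, hjX, h⟩
      · refine ⟨∅, by simp, ?_⟩
        have : symmDiff (bundle a k) ∅ = bundle a k := symmDiff_bot _
        rw [this, hown]; exact h
      · refine ⟨{j}, by simp, ?_⟩
        simp only [hX, Finset.mem_filter, Finset.mem_univ, true_and] at hjX
        obtain ⟨htk, ⟨hneg, haj, _⟩ | ⟨hpos, haj⟩⟩ := hjX
        · have hmem : j ∈ bundle a k := by simp [bundle, haj]
          have : symmDiff (bundle a k) {j} = (bundle a k).erase j := by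
            ext x; simp only [Finset.mem_symmDiff, Finset.mem_singleton, Finset.mem_erase]
            by_cases hx : x = j
            · subst hx; simp [hmem]
            · simp [hx]
          rw [this]
          have h2 := Finset.add_sum_erase (bundle a k) (fun j => pr u z k j) hmem
          rw [hown, hTie k j htk] at h2
          rw [abs_of_neg hneg] at h
          linarith
        · have hmem : j ∉ bundle a k := by simp [bundle, haj]
          have : symmDiff (bundle a k) {j} = insert j (bundle a k) := by
            ext x; simp only [Finset.mem_symmDiff, Finset.mem_singleton, Finset.mem_insert]
            by_cases hx : x = j
            · subst hx; simp [hmem]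
            · simp [hx]
          rw [this, Finset.sum_insert hmem, hown, hTie k j htk]
          rw [abs_of_pos hpos] at h
          linarith
    obtain ⟨S, hS1, hS2⟩ := hS
    refine ⟨S, hS1, ?_⟩
    intro l
    have h1 : Real.exp (z k) * bval (u k) (bundle a l) ≤ t := by
      rw [hmul]
      refine le_trans (Finset.sum_le_sum (fun j _ => hle k j)) ?_
      rw [← hVb]; exact hat l
    rw [← hmul] at hS2
    exact le_of_mul_le_mul_left (h1.trans hS2) ek

end Local

section Generic

structure NullOn {n m : ℕ} (E : Finset (Fin n × Fin m)) (y : Fin n × Fin m → ℝ) : Prop where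
  ne : ∃ e, y e ≠ 0
  supp : ∀ e, e ∉ E → y e = 0
  row : ∀ i, ∑ j, y (i, j) = 0
  col : ∀ j, ∑ i, y (i, j) = 0

theorem null_exists {n m : ℕ} (E : Finset (Fin n × Fin m)) (hE : E.Nonempty)
    (hr : ∀ e ∈ E, ∃ e' ∈ E, e' ≠ e ∧ e'.1 = e.1)
    (hcl : ∀ e ∈ E, ∃ e' ∈ E, e' ≠ e ∧ e'.2 = e.2) : ∃ y, NullOn E y := by
  classical
  let K := E.image Prod.fst
  let J := E.image Prod.snd
  have hK : 2 * K.card ≤ E.card := by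
    apply Finset.mul_card_image_le_card
    intro k hk
    obtain ⟨e, he, rfl⟩ := Finset.mem_image.1 hk
    obtain ⟨e', he', hne, h1⟩ := hr e he
    exact Finset.one_lt_card.2 ⟨e, by simp [he], e', by simp [he', h1], hne.symm⟩
  have hJ : 2 * J.card ≤ E.card := by
    apply Finset.mul_card_image_le_card
    intro k hk
    obtain ⟨e, he, rfl⟩ := Finset.mem_image.1 hk
    obtain ⟨e', he', hne, h1⟩ := hcl e he
    exact Finset.one_lt_card.2 ⟨e, by simp [he], e', by simp [he', h1], hne.symm⟩
  let L : (E → ℝ) →ₗ[ℝ] (K → ℝ) × (J → ℝ) :=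
    { toFun := fun f => (fun k => ∑ e : E, if e.1.1 = k.1 then f e else 0,
        fun j => ∑ e : E, if e.1.2 = j.1 then f e else 0)
      map_add' := by
        intro f g
        ext k <;> simp [← Finset.sum_add_distrib] <;>
          (apply Finset.sum_congr rfl; intro e _; split_ifs <;> simp)
      map_smul' := by
        intro r f
        ext k <;> simp [Finset.mul_sum] }
  have hninj : ¬ Function.Injective L := by
    intro hinj
    have h1 := LinearMap.finrank_le_finrank_of_injective hinj
    have h2 : Module.finrank ℝ ((K → ℝ) × (J → ℝ)) = K.card + J.card := by
      simp
    have h3 : Module.finrank ℝ (E → ℝ) = E.card := by simp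
    have heq : Module.finrank ℝ (E → ℝ) = Module.finrank ℝ ((K → ℝ) × (J → ℝ)) := by omega
    have hsurj := (LinearMap.injective_iff_surjective_of_finrank_eq_finrank heq).1 hinj
    obtain ⟨f, hf⟩ := hsurj (fun _ => 1, fun _ => 0)
    have r1 : ∀ k : K, ∑ e : E, (if e.1.1 = k.1 then f e else 0) = 1 := fun k =>
      congrFun (congrArg Prod.fst hf) k
    have r2 : ∀ k : J, ∑ e : E, (if e.1.2 = k.1 then f e else 0) = 0 := fun k =>
      congrFun (congrArg Prod.snd hf) k
    have s1 : ∑ e : E, f e = K.card := by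
      have : ∑ k : K, ∑ e : E, (if e.1.1 = k.1 then f e else 0) = K.card := by
        rw [Finset.sum_congr rfl (fun k _ => r1 k)]; simp
      rw [← this, Finset.sum_comm]
      apply Finset.sum_congr rfl
      intro e _
      rw [Finset.sum_eq_single (⟨e.1.1, Finset.mem_image_of_mem _ e.2⟩ : K)]
      · simp
      · intro b _ hb
        rw [if_neg]
        intro h
        exact hb (Subtype.ext h.symm)
      · simp
    have s2 : ∑ e : E, f e = 0 := by
      have : ∑ k : J, ∑ e : E, (if e.1.2 = k.1 then f e else 0) = 0 := by
        rw [Finset.sum_congr rfl (fun k _ => r2 k)]; simp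
      rw [← this, Finset.sum_comm]
      apply Finset.sum_congr rfl
      intro e _
      rw [Finset.sum_eq_single (⟨e.1.2, Finset.mem_image_of_mem _ e.2⟩ : J)]
      · simp
      · intro b _ hb
        rw [if_neg]
        intro h
        exact hb (Subtype.ext h.symm)
      · simp
    have hKp : 0 < K.card := Finset.card_pos.2 (hE.image _)
    rw [s2] at s1
    have : (K.card : ℝ) ≠ 0 := by exact_mod_cast hKp.ne'
    exact this s1.symm
  have : ∃ f, L f = 0 ∧ f ≠ 0 := by
    by_contra hcon
    push Not at hcon
    exact hninj ((injective_iff_map_eq_zero L).2 hcon)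
  obtain ⟨f, hf, hf0⟩ := this
  have r1 : ∀ k : K, ∑ e : E, (if e.1.1 = k.1 then f e else 0) = 0 := fun k =>
    congrFun (congrArg Prod.fst hf) k
  have r2 : ∀ k : J, ∑ e : E, (if e.1.2 = k.1 then f e else 0) = 0 := fun k =>
    congrFun (congrArg Prod.snd hf) k
  let y : Fin n × Fin m → ℝ := fun e => if h : e ∈ E then f ⟨e, h⟩ else 0
  have hsupp : ∀ e, e ∉ E → y e = 0 := fun e he => by simp [y, he]
  have hyf : ∀ e : E, y e.1 = f e := fun e => by simp [y]
  refine ⟨y, ?_, hsupp, ?_, ?_⟩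
  · obtain ⟨e, he⟩ := Function.ne_iff.1 hf0
    exact ⟨e.1, by rw [hyf]; exact he⟩
  · intro i
    have h1 : ∑ j, y (i, j) = ∑ e : Fin n × Fin m, if e.1 = i then y e else 0 := by
      rw [Fintype.sum_prod_type, Finset.sum_eq_single i]
      · simp
      · intro b _ hb; simp [hb]
      · simp
    have h2 : (∑ e : Fin n × Fin m, if e.1 = i then y e else 0)
        = ∑ e ∈ E, if e.1 = i then y e else 0 := by
      symm
      apply Finset.sum_subset (Finset.subset_univ _)
      intro e _ he; simp [hsupp e he]
    rw [h1, h2, ← Finset.sum_coe_sort]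
    by_cases hi : i ∈ K
    · refine Eq.trans ?_ (r1 ⟨i, hi⟩)
      apply Finset.sum_congr rfl
      intro e _; rw [hyf]
    · apply Finset.sum_eq_zero
      intro e _
      rw [if_neg]
      rintro rfl
      exact hi (Finset.mem_image_of_mem _ e.2)
  · intro i
    have h1 : ∑ j, y (j, i) = ∑ e : Fin n × Fin m, if e.2 = i then y e else 0 := by
      rw [Fintype.sum_prod_type]
      simp
    have h2 : (∑ e : Fin n × Fin m, if e.2 = i then y e else 0)
        = ∑ e ∈ E, if e.2 = i then y e else 0 := by
      symm
      apply Finset.sum_subset (Finset.subset_univ _)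
      intro e _ he; simp [hsupp e he]
    rw [h1, h2, ← Finset.sum_coe_sort]
    by_cases hi : i ∈ J
    · refine Eq.trans ?_ (r2 ⟨i, hi⟩)
      apply Finset.sum_congr rfl
      intro e _; rw [hyf]
    · apply Finset.sum_eq_zero
      intro e _
      rw [if_neg]
      rintro rfl
      exact hi (Finset.mem_image_of_mem _ e.2)

def Gen {n m : ℕ} (u : Fin n → Fin m → ℝ) : Prop :=
  ∀ E : Finset (Fin n × Fin m), (∀ e ∈ E, u e.1 e.2 ≠ 0) → (∃ y, NullOn E y) →
    ∃ y, NullOn E y ∧ ∑ e, y e * Real.log |u e.1 e.2| ≠ 0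

/-- Perturbed valuations. -/
noncomputable def pert {n m : ℕ} (u : Fin n → Fin m → ℝ) (s : ℝ) (i : Fin n) (j : Fin m) : ℝ :=
  u i j * Real.exp (s ^ ((finProdFinEquiv (i, j) : ℕ) + 1))

theorem pert_gen {n m : ℕ} (u : Fin n → Fin m → ℝ) (δ : ℝ) (hδ : 0 < δ) :
    ∃ s, 0 < s ∧ s < δ ∧ Gen (pert u s) := by
  classical
  have hex : ∀ E : Finset (Fin n × Fin m), ∃ y : Fin n × Fin m → ℝ,
      (∃ y, NullOn E y) → NullOn E y := by
    intro E
    by_cases h : ∃ y, NullOn E y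
    · obtain ⟨y, hy⟩ := h; exact ⟨y, fun _ => hy⟩
    · exact ⟨0, fun h' => absurd h' h⟩
  choose Y hY using hex
  let P : Finset (Fin n × Fin m) → Polynomial ℝ := fun E =>
    ∑ e : Fin n × Fin m, Polynomial.C (Y E e) *
      (Polynomial.C (Real.log |u e.1 e.2|) + Polynomial.X ^ ((finProdFinEquiv e : ℕ) + 1))
  have hP : ∀ E, (∃ y, NullOn E y) → P E ≠ 0 := by
    intro E hE h0
    obtain ⟨e0, he0⟩ := (hY E hE).ne
    apply he0
    have h1 : (P E).coeff ((finProdFinEquiv e0 : ℕ) + 1) = 0 := by rw [h0]; simp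
    simp only [P, Polynomial.finsetSum_coeff, Polynomial.coeff_C_mul, Polynomial.coeff_add,
      Polynomial.coeff_X_pow, Polynomial.coeff_C_succ, zero_add] at h1
    rw [Finset.sum_eq_single e0] at h1
    · simpa using h1
    · intro b _ hb
      rw [if_neg]
      · simp
      · intro h
        apply hb
        have : (finProdFinEquiv e0 : ℕ) = finProdFinEquiv b := by omega
        exact (finProdFinEquiv.injective (Fin.ext this)).symm
    · simp
  let B : Finset ℝ := Finset.univ.biUnion fun E => (P E).roots.toFinset
  obtain ⟨s, hs, hsB⟩ := (Set.Ioo_infinite hδ).exists_notMem_finset B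
  refine ⟨s, hs.1, hs.2, ?_⟩
  intro E hne hE
  refine ⟨Y E, hY E hE, ?_⟩
  intro h0
  apply hsB
  simp only [B, Finset.mem_biUnion, Finset.mem_univ, true_and]
  refine ⟨E, ?_⟩
  rw [Multiset.mem_toFinset, Polynomial.mem_roots (hP E hE), Polynomial.IsRoot.def]
  rw [← h0]
  simp only [P, Polynomial.eval_finsetSum, Polynomial.eval_mul, Polynomial.eval_C,
    Polynomial.eval_add, Polynomial.eval_pow, Polynomial.eval_X]
  apply Finset.sum_congr rfl
  intro e _
  by_cases he : e ∈ E
  · have h := hne e he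
    congr 1
    unfold pert at h ⊢
    have hu : u e.1 e.2 ≠ 0 := fun h' => h (by rw [h']; simp)
    rw [abs_mul, Real.log_mul (abs_ne_zero.2 hu) (by positivity), Real.abs_exp, Real.log_exp]
  · rw [(hY E hE).supp e he]; simp

theorem tie_log {n m : ℕ} {u : Fin n → Fin m → ℝ} (hT : Types u) (z : Fin n → ℝ) (j : Fin m) :
    ∃ l : ℝ, ∀ i, Tie u z i j → u i j ≠ 0 ∧ Real.log |u i j| = l - z i := by
  by_cases h : ∃ i, Tie u z i j
  · obtain ⟨i0, h0⟩ := h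
    have hne : ∀ i, Tie u z i j → u i j ≠ 0 := by
      intro i hi
      rcases hT j with h | ⟨_, k, hk⟩
      · exact (h i).ne
      · intro h0
        have h1 := hi k
        unfold pr at h1
        rw [h0, mul_zero] at h1
        have : 0 < Real.exp (z k) * u k j := by positivity
        linarith
    refine ⟨Real.log |pr u z i0 j|, fun i hi => ⟨hne i hi, ?_⟩⟩
    have : pr u z i0 j = pr u z i j := le_antisymm (hi i0) (h0 i)
    rw [this]
    unfold pr
    rw [abs_mul, Real.log_mul (by positivity) (abs_ne_zero.2 (hne i hi)), Real.abs_exp,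
      Real.log_exp]
    ring
  · exact ⟨0, fun i hi => absurd ⟨i, hi⟩ h⟩

theorem gen_leaf {n m : ℕ} {u : Fin n → Fin m → ℝ} (hT : Types u) (hG : Gen u) (z : Fin n → ℝ)
    (K : Finset (Fin n)) (hK : K.Nonempty) :
    ∃ k ∈ K, ∀ j j', Tie u z k j → (∃ k' ∈ K, k' ≠ k ∧ Tie u z k' j) →
      Tie u z k j' → (∃ k' ∈ K, k' ≠ k ∧ Tie u z k' j') → j = j' := by
  classical
  by_contra hcon
  push Not at hcon
  choose l hl using fun j => tie_log hT z j
  let E : Finset (Fin n × Fin m) := Finset.univ.filter fun e =>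
    e.1 ∈ K ∧ Tie u z e.1 e.2 ∧ ∃ k' ∈ K, k' ≠ e.1 ∧ Tie u z k' e.2
  have hmem : ∀ k j, (k, j) ∈ E ↔ k ∈ K ∧ Tie u z k j ∧ ∃ k' ∈ K, k' ≠ k ∧ Tie u z k' j := by
    intro k j; simp [E]
  have hEne : E.Nonempty := by
    obtain ⟨k, hk⟩ := hK
    obtain ⟨j, j', h1, h2, h3, h4, h5⟩ := hcon k hk
    exact ⟨(k, j), (hmem k j).2 ⟨hk, h1, h2⟩⟩
  have hnull : ∃ y, NullOn E y := by
    apply null_exists E hEne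
    · rintro ⟨k, j0⟩ he
      have hk := ((hmem k j0).1 he).1
      obtain ⟨j, j', h1, h2, h3, h4, h5⟩ := hcon k hk
      by_cases hj : j = j0
      · refine ⟨(k, j'), (hmem _ _).2 ⟨hk, h3, h4⟩, ?_, rfl⟩
        intro h
        rw [Prod.mk.injEq] at h
        exact h5 (hj.trans h.2.symm)
      · refine ⟨(k, j), (hmem _ _).2 ⟨hk, h1, h2⟩, ?_, rfl⟩
        intro h
        rw [Prod.mk.injEq] at h
        exact hj h.2
    · rintro ⟨k, j⟩ he
      obtain ⟨hk, ht, k', hk', hne, ht'⟩ := (hmem k j).1 he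
      refine ⟨(k', j), (hmem _ _).2 ⟨hk', ht', k, hk, hne.symm, ht⟩, ?_, rfl⟩
      intro h
      rw [Prod.mk.injEq] at h
      exact hne h.1
  obtain ⟨y, hy, hsum⟩ := hG E (by
    rintro ⟨k, j⟩ he
    exact (hl j k ((hmem k j).1 he).2.1).1) hnull
  apply hsum
  have h1 : ∀ e : Fin n × Fin m, y e * Real.log |u e.1 e.2| = y e * l e.2 - y e * z e.1 := by
    rintro ⟨k, j⟩
    by_cases he : (k, j) ∈ E
    · rw [(hl j k ((hmem k j).1 he).2.1).2]; ring
    · rw [hy.supp _ he]; ring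
  rw [Finset.sum_congr rfl (fun e _ => h1 e), Finset.sum_sub_distrib]
  have h2 : ∑ e : Fin n × Fin m, y e * z e.1 = 0 := by
    rw [Fintype.sum_prod_type]
    apply Finset.sum_eq_zero
    intro i _
    show ∑ j, y (i, j) * z i = 0
    rw [← Finset.sum_mul, hy.row, zero_mul]
  have h3 : ∑ e : Fin n × Fin m, y e * l e.2 = 0 := by
    rw [Fintype.sum_prod_type_right]
    apply Finset.sum_eq_zero
    intro i _
    show ∑ k, y (k, i) * l i = 0
    rw [← Finset.sum_mul, hy.col, zero_mul]
  rw [h2, h3, sub_zero]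

theorem gen_elim {n m : ℕ} {u : Fin n → Fin m → ℝ} (hT : Types u) (hG : Gen u) (z : Fin n → ℝ) :
    Elim u z := by
  classical
  have key : ∀ N (K : Finset (Fin n)), K.card = N → ∃ rank : Fin n → ℕ, Set.InjOn rank K ∧
      ∀ k ∈ K, ∀ j j', Tie u z k j → (∃ k' ∈ K, rank k < rank k' ∧ Tie u z k' j) →
        Tie u z k j' → (∃ k' ∈ K, rank k < rank k' ∧ Tie u z k' j') → j = j' := by
    intro N
    induction N with
    | zero =>
      intro K hK
      rw [Finset.card_eq_zero] at hK
      subst hK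
      exact ⟨fun _ => 0, by simp, by simp⟩
    | succ N ih =>
      intro K hK
      obtain ⟨k0, hk0, hleaf⟩ := gen_leaf hT hG z K (Finset.card_pos.1 (by omega))
      obtain ⟨r, hr, hr2⟩ := ih (K.erase k0) (by rw [Finset.card_erase_of_mem hk0]; omega)
      refine ⟨fun k => if k = k0 then 0 else r k + 1, ?_, ?_⟩
      · intro a ha b hb hab
        simp only at hab
        by_cases h1 : a = k0
        · by_cases h2 : b = k0
          · rw [h1, h2]
          · simp [h1, h2] at hab
        · by_cases h2 : b = k0
          · simp [h1, h2] at hab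
          · simp only [h1, h2, if_false] at hab
            exact hr (by simpa [h1] using ha) (by simpa [h2] using hb) (by omega)
      · intro k hk j j' h1 h2 h3 h4
        by_cases hkk : k = k0
        · subst hkk
          have conv : ∀ j, (∃ k' ∈ K, (if k = k then 0 else r k + 1) <
              (if k' = k then 0 else r k' + 1) ∧ Tie u z k' j) →
              ∃ k' ∈ K, k' ≠ k ∧ Tie u z k' j := by
            rintro j ⟨k', hk', hlt, ht⟩
            refine ⟨k', hk', ?_, ht⟩
            rintro rfl
            exact lt_irrefl _ hlt
          exact hleaf j j' h1 (conv j h2) h3 (conv j' h4)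
        · have conv : ∀ j, (∃ k' ∈ K, (if k = k0 then 0 else r k + 1) <
              (if k' = k0 then 0 else r k' + 1) ∧ Tie u z k' j) →
              ∃ k' ∈ K.erase k0, r k < r k' ∧ Tie u z k' j := by
            rintro j ⟨k', hk', hlt, ht⟩
            rw [if_neg hkk] at hlt
            by_cases h : k' = k0
            · simp [h] at hlt
            · rw [if_neg h] at hlt
              exact ⟨k', Finset.mem_erase.2 ⟨h, hk'⟩, by omega, ht⟩
          exact hr2 k (Finset.mem_erase.2 ⟨hkk, hk⟩) j j' h1 (conv j h2) h3 (conv j' h4)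
  obtain ⟨r, h1, h2⟩ := key _ Finset.univ rfl
  refine ⟨r, fun a b hab => h1 (by simp) (by simp) hab, ?_⟩
  rintro k j j' ha ⟨k', hb, hb'⟩ hc ⟨k'', hd, hd'⟩
  exact h2 k (Finset.mem_univ _) j j' ha ⟨k', Finset.mem_univ _, hb, hb'⟩ hc
    ⟨k'', Finset.mem_univ _, hd, hd'⟩

end Generic

section Final
open Filter Topology

theorem tendsto_pert {n m : ℕ} (u : Fin n → Fin m → ℝ) (i : Fin n) (j : Fin m)
    (s : ℕ → ℝ) (hs : Tendsto s atTop (𝓝 0)) :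
    Tendsto (fun t => pert u (s t) i j) atTop (𝓝 (u i j)) := by
  have hc : Continuous fun x : ℝ => u i j * Real.exp (x ^ ((finProdFinEquiv (i, j) : ℕ) + 1)) := by
    fun_prop
  have := (hc.tendsto 0).comp hs
  simpa [pert, Function.comp_def] using this

theorem pert_types {n m : ℕ} {u : Fin n → Fin m → ℝ} (hT : Types u) (s : ℝ) :
    Types (pert u s) := by
  intro j
  rcases hT j with h | ⟨h, i, hi⟩
  · left; intro i; exact mul_neg_of_neg_of_pos (h i) (Real.exp_pos _)
  · right
    exact ⟨fun i => mul_nonneg (h i) (Real.exp_pos _).le, i, mul_pos hi (Real.exp_pos _)⟩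

theorem pert_bdd {n m : ℕ} {u : Fin n → Fin m → ℝ} {c C : ℝ}
    (hc : ∀ i j, u i j ≠ 0 → c ≤ |u i j|) (hC : ∀ i j, |u i j| * Real.exp 1 ≤ C)
    {s : ℝ} (h0 : 0 ≤ s) (h1 : s ≤ 1) : Bdd (pert u s) c C := by
  intro i j
  unfold pert
  rw [abs_mul, Real.abs_exp]
  have ha : 0 ≤ s ^ ((finProdFinEquiv (i, j) : ℕ) + 1) := by positivity
  have hb : s ^ ((finProdFinEquiv (i, j) : ℕ) + 1) ≤ 1 := pow_le_one₀ h0 h1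
  constructor
  · refine le_trans ?_ (hC i j)
    gcongr
  · intro h
    have hu : u i j ≠ 0 := fun h' => h (by rw [h']; simp)
    have h2 := hc i j hu
    have h3 := Real.one_le_exp ha
    have h4 := abs_nonneg (u i j)
    nlinarith

theorem exists_consts {n m : ℕ} (u : Fin n → Fin m → ℝ) : ∃ c C : ℝ, 0 < c ∧ c ≤ 1 ∧ 1 ≤ C ∧
    (∀ i j, u i j ≠ 0 → c ≤ |u i j|) ∧ (∀ i j, |u i j| * Real.exp 1 ≤ C) := by
  classical
  have h1 : ∃ c : ℝ, 0 < c ∧ c ≤ 1 ∧ ∀ e : Fin n × Fin m, u e.1 e.2 ≠ 0 → c ≤ |u e.1 e.2| := by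
    let S : Finset ℝ := insert 1 ((Finset.univ.filter fun e : Fin n × Fin m =>
      u e.1 e.2 ≠ 0).image fun e => |u e.1 e.2|)
    have hS : S.Nonempty := Finset.insert_nonempty _ _
    refine ⟨S.min' hS, ?_, Finset.min'_le _ _ (Finset.mem_insert_self _ _), ?_⟩
    · rw [Finset.lt_min'_iff]
      intro y hy
      rcases Finset.mem_insert.1 hy with rfl | hy
      · exact one_pos
      · obtain ⟨e, he, rfl⟩ := Finset.mem_image.1 hy
        exact abs_pos.2 (Finset.mem_filter.1 he).2
    · intro e he
      apply Finset.min'_le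
      apply Finset.mem_insert_of_mem
      exact Finset.mem_image.2 ⟨e, by simp [he], rfl⟩
  obtain ⟨c, hc, hc1, hc2⟩ := h1
  refine ⟨c, 1 + ∑ e : Fin n × Fin m, |u e.1 e.2| * Real.exp 1, hc, hc1, ?_,
    fun i j => hc2 (i, j), ?_⟩
  · have : 0 ≤ ∑ e : Fin n × Fin m, |u e.1 e.2| * Real.exp 1 :=
      Finset.sum_nonneg fun e _ => by positivity
    linarith
  · intro i j
    have := Finset.single_le_sum (f := fun e : Fin n × Fin m => |u e.1 e.2| * Real.exp 1)
      (fun e _ => by positivity) (Finset.mem_univ (i, j))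
    simp only at this
    linarith

theorem pert_solution {N m : ℕ} {u : Fin (N+1) → Fin m → ℝ} (hT : Types u) {c C κ R : ℝ}
    (hc : 0 < c) (hc1 : c ≤ 1) (hC : 1 ≤ C) (hb : Bdd u c C) (hG : Gen u) (hκ0 : 0 < κ)
    (hκ : C^2 < c^2 * Real.exp κ) (hR0 : 0 ≤ R) (hRκ : κ ≤ R) (hR : m * C ≤ c * Real.exp R) :
    ∃ z : Fin (N+1) → ℝ, (∀ j, |z j| ≤ R + 2) ∧ ∃ a, Cons u z a ∧ IEF1 u (bundle a) := by
  obtain ⟨z, hz, hzb⟩ := kkm (Dset u κ) (closed_Dset u κ) R hR0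
    (cover hT hc hC hb hκ hR0 hRκ hR)
  refine ⟨z, hzb, local_search hT hc hb hκ0 ?_ hz (gen_elim hT hG z)⟩
  have := Real.exp_pos κ
  have h1 : C ≤ C ^ 2 := by nlinarith
  have h2 : c ^ 2 ≤ c := by nlinarith
  nlinarith

theorem tendsto_bval {n m : ℕ} {u : ℕ → Fin n → Fin m → ℝ} {v : Fin n → Fin m → ℝ}
    (h : ∀ i j, Tendsto (fun t => u t i j) atTop (𝓝 (v i j))) (i : Fin n) (S : Finset (Fin m)) :
    Tendsto (fun t => bval (u t i) S) atTop (𝓝 (bval (v i) S)) := by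
  unfold bval
  exact tendsto_finsetSum _ fun j _ => h i j

theorem exists_limit {N m : ℕ} {v : Fin (N+1) → Fin m → ℝ} (hT : Types v) :
    ∃ z a, Cons v z a ∧ IEF1 v (bundle a) := by
  classical
  obtain ⟨c, C, hc, hc1, hC, hb1, hb2⟩ := exists_consts v
  obtain ⟨κ0, hκ0⟩ := (Real.tendsto_exp_atTop.eventually_gt_atTop (C^2 / c^2)).exists_forall_of_atTop
  obtain ⟨R0, hR0⟩ := (Real.tendsto_exp_atTop.eventually_gt_atTop (m * C / c)).exists_forall_of_atTop
  let κ := max κ0 1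
  let R := max R0 κ
  have hκpos : 0 < κ := lt_of_lt_of_le one_pos (le_max_right _ _)
  have hκ : C^2 < c^2 * Real.exp κ := by
    have := hκ0 κ (le_max_left _ _)
    rw [div_lt_iff₀ (by positivity)] at this
    linarith
  have hR : m * C ≤ c * Real.exp R := by
    have := hR0 R (le_max_left _ _)
    rw [div_lt_iff₀ (by positivity)] at this
    linarith
  have hRκ : κ ≤ R := le_max_right _ _
  have hs : ∀ t : ℕ, ∃ s : ℝ, 0 < s ∧ s < 1 / ((t : ℝ) + 1) ∧ Gen (pert v s) := fun t =>
    pert_gen v _ (by positivity)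
  choose s hs0 hs1 hsG using hs
  have hslim : Tendsto s atTop (𝓝 0) :=
    squeeze_zero (fun t => (hs0 t).le) (fun t => (hs1 t).le) tendsto_one_div_add_atTop_nhds_zero_nat
  have hle : ∀ t, s t ≤ 1 := fun t => (hs1 t).le.trans (by
    rw [div_le_one (by positivity)]
    have : (0 : ℝ) ≤ t := Nat.cast_nonneg t
    linarith)
  have hsol := fun t => pert_solution (pert_types hT (s t)) hc hc1 hC
    (pert_bdd hb1 hb2 (hs0 t).le (hle t)) (hsG t) hκpos hκ (hκpos.le.trans hRκ) hRκ hR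
  choose z hz a hcons hief using hsol
  choose S hS1 hS2 using hief
  -- compactness
  have hcomp : IsCompact (Set.univ.pi fun _ : Fin (N+1) => Set.Icc (-(R+2)) (R+2)) :=
    isCompact_univ_pi fun _ => isCompact_Icc
  obtain ⟨z0, _, φ, hφ, hzl⟩ := hcomp.tendsto_subseq (x := z) (fun t j _ => abs_le.1 (hz t j))
  -- pigeonhole
  obtain ⟨p, hp⟩ := Finite.exists_infinite_fiber (fun t => (a (φ t), S (φ t)))
  have hfreq : ∃ᶠ t in atTop, (a (φ t), S (φ t)) = p := by
    rw [Nat.frequently_atTop_iff_infinite]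
    exact Set.infinite_coe_iff.1 hp
  obtain ⟨ψ, hψ, hψp⟩ := Filter.extraction_of_frequently_atTop hfreq
  have ha : ∀ t, a (φ (ψ t)) = p.1 := fun t => congrArg Prod.fst (hψp t)
  have hSS : ∀ t, S (φ (ψ t)) = p.2 := fun t => congrArg Prod.snd (hψp t)
  have hθ : Tendsto (fun t => φ (ψ t)) atTop atTop := hφ.tendsto_atTop.comp hψ.tendsto_atTop
  have hu : ∀ i j, Tendsto (fun t => pert v (s (φ (ψ t))) i j) atTop (𝓝 (v i j)) := fun i j =>
    tendsto_pert v i j _ (hslim.comp hθ)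
  have hzl2 : ∀ i, Tendsto (fun t => z (φ (ψ t)) i) atTop (𝓝 (z0 i)) := fun i =>
    (tendsto_pi_nhds.1 (hzl.comp hψ.tendsto_atTop)) i
  have hpr : ∀ i j, Tendsto (fun t => pr (pert v (s (φ (ψ t)))) (z (φ (ψ t))) i j) atTop
      (𝓝 (pr v z0 i j)) := fun i j =>
    ((Real.continuous_exp.tendsto _).comp (hzl2 i)).mul (hu i j)
  refine ⟨z0, p.1, ?_, ?_⟩
  · intro j k
    refine le_of_tendsto_of_tendsto' (hpr k j) (hpr (p.1 j) j) fun t => ?_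
    have := hcons (φ (ψ t)) j k
    rwa [ha t] at this
  · intro i
    refine ⟨p.2 i, ?_, ?_⟩
    · rw [← hSS 0]; exact hS1 _ i
    · intro j
      refine le_of_tendsto_of_tendsto' (tendsto_bval hu i _) (tendsto_bval hu i _) fun t => ?_
      have := hS2 (φ (ψ t)) i j
      rwa [ha t, hSS t] at this

theorem alloc_sum {n m : ℕ} {B : Fin n → Finset (Fin m)} (o : Fin m → Fin n)
    (ho : ∀ j i, j ∈ B i ↔ i = o j) (v : Fin n → Fin m → ℝ) (z : Fin n → ℝ) :
    ∑ i, Real.exp (z i) * bval (v i) (B i) = ∑ j, pr v z (o j) j := by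
  classical
  have h1 : ∀ i, Real.exp (z i) * bval (v i) (B i) = ∑ j, if i = o j then pr v z i j else 0 := by
    intro i
    unfold bval
    rw [Finset.mul_sum, ← Finset.sum_filter]
    apply Finset.sum_congr
    · ext j; simp [ho]
    · intro j _; rfl
  rw [Finset.sum_congr rfl fun i _ => h1 i, Finset.sum_comm]
  apply Finset.sum_congr rfl
  intro j _
  simp

theorem cons_po {n m : ℕ} {v : Fin n → Fin m → ℝ} {z : Fin n → ℝ} {a : Fin m → Fin n}
    (hc : Cons v z a) : ParetoOptimal v (bundle a) := by
  rintro ⟨B, hB, hw, k, hk⟩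
  choose o ho ho2 using hB
  have h1 := alloc_sum o (fun j i => ⟨fun h => ho2 j i h, fun h => h ▸ ho j⟩) v z
  have h2 := alloc_sum (B := bundle a) a (fun j i => by simp [bundle, eq_comm]) v z
  have h3 : ∑ j, pr v z (o j) j ≤ ∑ j, pr v z (a j) j :=
    Finset.sum_le_sum fun j _ => hc j (o j)
  have h4 : ∑ i, Real.exp (z i) * bval (v i) (bundle a i) <
      ∑ i, Real.exp (z i) * bval (v i) (B i) :=
    Finset.sum_lt_sum (fun i _ => mul_le_mul_of_nonneg_left (hw i) (Real.exp_pos _).le)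
      ⟨k, Finset.mem_univ _, mul_lt_mul_of_pos_left hk (Real.exp_pos _)⟩
  linarith

end Final

theorem stmt0 (n m : ℕ) (hn : 0 < n) (v : Fin n → Fin m → ℝ)
    (htypes : ∀ j : Fin m,
      (∀ i, 0 < v i j) ∨ (∀ i, v i j < 0) ∨
      ((∀ i, 0 ≤ v i j) ∧ (∃ a, 0 < v a j) ∧ (∃ b, v b j = 0))) :
    ∃ A : Fin n → Finset (Fin m), IsAlloc A ∧ IEF1 v A ∧ ParetoOptimal v A := by
  obtain ⟨N, rfl⟩ : ∃ N, n = N + 1 := ⟨n - 1, by omega⟩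
  have hT : Types v := by
    intro j
    rcases htypes j with h | h | ⟨h, h', _⟩
    · exact Or.inr ⟨fun i => (h i).le, 0, h 0⟩
    · exact Or.inl h
    · exact Or.inr ⟨h, h'⟩
  obtain ⟨z, a, hc, hi⟩ := exists_limit hT
  refine ⟨bundle a, ?_, hi, cons_po hc⟩
  intro j
  refine ⟨a j, by simp [bundle], ?_⟩
  intro i hi
  simp [bundle] at hi
  exact hi.symm
end

section
/- (Knaster–Kuratowski–Mazurkiewicz, support version) Let C_1, C_2, …, C_n ⊆ Δ_{n−1} be closed subsets of the (n−1)-dimensional standard simplex such that for every w ∈ Δ_{n−1} there exists an index i ∈ Supp(w) = {k : w_k > 0} with w ∈ C_i. Then the intersection ∩_{i=1}^n C_i is nonempty. -/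
section Scarf

set_option linter.unusedSectionVars false

variable {I Y : Type*} [Fintype I] [DecidableEq I] [Fintype Y] [DecidableEq Y]

/-- Dominance in the sense of Scarf. -/
def ScarfDom (r : I → Y → ℕ) (σ : Finset Y) : Prop :=
  ∀ y, ∃ i, ∀ s ∈ σ, r i y ≤ r i s

theorem scarf_dom_mono (r : I → Y → ℕ) {σ τ : Finset Y} (h : τ ⊆ σ) (hd : ScarfDom r σ) :
    ScarfDom r τ := fun y => by
  obtain ⟨i, hi⟩ := hd y
  exact ⟨i, fun s hs => hi s (h hs)⟩

theorem scarf_collision (τ : Finset Y) (m : I → Y) (hm : ∀ i, m i ∈ τ)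
    (hs : ∀ t ∈ τ, ∃ i, m i = t) (hc : τ.card + 1 = Fintype.card I) :
    ∃ a b, a ≠ b ∧ m a = m b ∧
      ∀ i j, i ≠ j → m i = m j → (i = a ∧ j = b) ∨ (i = b ∧ j = a) := by
  classical
  obtain ⟨a, -, b, -, hab, hmab⟩ := Finset.exists_ne_map_eq_of_card_lt_of_maps_to
    (s := (Finset.univ : Finset I)) (t := τ) (f := m) (by rw [Finset.card_univ]; omega)
    (fun i _ => hm i)
  have key : ∀ p q, p ≠ q → m p = m q → ∀ i j, i ≠ p → j ≠ p → m i = m j → i = j := by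
    intro p q hpq hmpq i j hi hj hij
    have hinj : Set.InjOn m ((Finset.univ.erase p : Finset I) : Set I) := by
      apply Finset.injOn_of_card_image_eq
      have : (Finset.univ.erase p).image m = τ := by
        ext t
        constructor
        · intro h
          obtain ⟨i, -, rfl⟩ := Finset.mem_image.1 h
          exact hm i
        · intro h
          obtain ⟨i, rfl⟩ := hs t h
          by_cases hip : i = p
          · subst hip
            exact Finset.mem_image.2 ⟨q, by simp [Ne.symm hpq], hmpq.symm⟩
          · exact Finset.mem_image.2 ⟨i, by simp [hip], rfl⟩
      rw [this, Finset.card_erase_of_mem (Finset.mem_univ _), Finset.card_univ]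
      omega
    exact hinj (by simp [hi]) (by simp [hj]) hij
  refine ⟨a, b, hab, hmab, ?_⟩
  intro i j hij hmij
  have h1 := key a b hab hmab i j
  have h2 := key b a hab.symm hmab.symm i j
  by_cases hia : i = a <;> by_cases hib : i = b <;> by_cases hja : j = a <;>
    by_cases hjb : j = b <;> simp_all

theorem scarf_half (r : I → Y → ℕ) (τ : Finset Y) (hd : ScarfDom r τ) (m : I → Y)
    (hm : ∀ i, m i ∈ τ) (hmin : ∀ i, ∀ t ∈ τ, r i (m i) ≤ r i t)
    (hs : ∀ t ∈ τ, ∃ i, m i = t) (p q : I) (hpq : p ≠ q) (hmpq : m p = m q)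
    (hne : ∃ x, ∀ i, i ≠ p → r i (m i) < r i x) :
    ∃ y, y ∉ τ ∧ (∀ i, i ≠ p → r i (m i) < r i y) ∧
      (∀ x, (∀ i, i ≠ p → r i (m i) < r i x) → r p x ≤ r p y) ∧
      ScarfDom r (insert y τ) := by
  classical
  obtain ⟨x0, hx0⟩ := hne
  obtain ⟨y, hy, hymax⟩ := Finset.exists_max_image
    (Finset.univ.filter fun x => ∀ i, i ≠ p → r i (m i) < r i x) (r p) ⟨x0, by simpa using hx0⟩
  replace hy : ∀ i, i ≠ p → r i (m i) < r i y := by simpa using hy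
  replace hymax : ∀ x, (∀ i, i ≠ p → r i (m i) < r i x) → r p x ≤ r p y := by
    intro x hx; exact hymax x (by simpa using hx)
  refine ⟨y, ?_, hy, hymax, ?_⟩
  · intro hyt
    obtain ⟨i, rfl⟩ := hs y hyt
    by_cases hip : i = p
    · subst hip
      have := hy q hpq.symm
      rw [hmpq] at this
      exact lt_irrefl _ this
    · exact lt_irrefl _ (hy i hip)
  · intro x
    by_cases hx : ∀ i, i ≠ p → r i (m i) < r i x
    · refine ⟨p, fun s hsm => ?_⟩
      rcases Finset.mem_insert.1 hsm with rfl | hst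
      · exact hymax x hx
      · obtain ⟨i, hi⟩ := hd x
        by_cases hip : i = p
        · subst hip; exact hi s hst
        · exact absurd (hi _ (hm i)) (not_le.2 (hx i hip))
    · push Not at hx
      obtain ⟨i, hip, hi⟩ := hx
      refine ⟨i, fun s hsm => ?_⟩
      rcases Finset.mem_insert.1 hsm with rfl | hst
      · exact hi.trans (hy i hip).le
      · exact hi.trans (hmin i s hst)

theorem scarf_door (r : I → Y → ℕ) (e : I → Y) (hr : ∀ i, Function.Injective (r i))
    (he : Function.Injective e) (h0 : ∀ i y, r i (e i) ≤ r i y)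
    (h1 : ∀ i j x, j ≠ i → (∀ k, x ≠ e k) → r i x < r i (e j))
    (τ : Finset Y) (hd : ScarfDom r τ) (hc : τ.card + 1 = Fintype.card I)
    (x0 : Y) (hx0 : x0 ∈ τ) (hx0e : ∀ k, x0 ≠ e k) :
    ∃ σ₁ σ₂ : Finset Y, σ₁ ≠ σ₂ ∧ ∀ σ : Finset Y,
      ((ScarfDom r σ ∧ σ.card = Fintype.card I) ∧ τ ⊆ σ) ↔ (σ = σ₁ ∨ σ = σ₂) := by
  classical
  have hex : ∀ i, ∃ y ∈ τ, ∀ t ∈ τ, r i y ≤ r i t := fun i =>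
    Finset.exists_min_image τ (r i) ⟨x0, hx0⟩
  choose m hm hmin using hex
  have hs : ∀ t ∈ τ, ∃ i, m i = t := by
    intro t ht
    obtain ⟨i, hi⟩ := hd t
    exact ⟨i, hr i (le_antisymm (hmin i t ht) (hi _ (hm i)))⟩
  obtain ⟨a, b, hab, hmab, huniq⟩ := scarf_collision τ m hm hs hc
  have hne : ∀ p, ∃ x, ∀ i, i ≠ p → r i (m i) < r i x := by
    intro p
    refine ⟨e p, fun i hip => ?_⟩
    by_cases hk : ∀ k, m i ≠ e k
    · exact h1 i p _ hip.symm hk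
    · push Not at hk
      obtain ⟨k, hk⟩ := hk
      by_cases hki : k = i
      · subst hki
        rw [hk]
        exact lt_of_le_of_ne (h0 _ _) fun h => hip (he (hr _ h))
      · have := h1 i k x0 hki hx0e
        have h2 := hmin i x0 hx0
        rw [hk] at h2
        omega
  obtain ⟨ya, hya1, hya2, hya3, hya4⟩ := scarf_half r τ hd m hm hmin hs a b hab hmab (hne a)
  obtain ⟨yb, hyb1, hyb2, hyb3, hyb4⟩ :=
    scarf_half r τ hd m hm hmin hs b a hab.symm hmab.symm (hne b)
  refine ⟨insert ya τ, insert yb τ, ?_, ?_⟩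
  · intro h
    have hyy : ya = yb := by
      have : ya ∈ insert yb τ := h ▸ Finset.mem_insert_self _ _
      rcases Finset.mem_insert.1 this with h | h
      · exact h
      · exact absurd h hya1
    subst hyy
    obtain ⟨i, hi⟩ := hd ya
    have hi' := hi _ (hm i)
    by_cases hia : i = a
    · have := hyb2 i (by rw [hia]; exact hab)
      omega
    · have := hya2 i hia
      omega
  · intro σ
    constructor
    · rintro ⟨⟨hdσ, hcσ⟩, hsub⟩
      have hcard : (σ \ τ).card = 1 := by
        rw [Finset.card_sdiff_of_subset hsub]; omega
      obtain ⟨y, hy⟩ := Finset.card_eq_one.1 hcard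
      have hyσ : y ∈ σ \ τ := by rw [hy]; simp
      obtain ⟨hyσ, hyτ⟩ := Finset.mem_sdiff.1 hyσ
      have hσ : σ = insert y τ := by
        rw [← Finset.sdiff_union_of_subset hsub, hy]; rfl
      have hA : ∀ t ∈ τ, ∃ j, m j = t ∧ r j t ≤ r j y := by
        intro t ht
        obtain ⟨j, hj⟩ := hdσ t
        exact ⟨j, hr j (le_antisymm (hmin j t ht) (hj _ (hsub (hm j)))), hj y hyσ⟩
      have hP : ∀ p, r p y < r p (m p) → ∃ j, m p = m j ∧ r j (m j) ≤ r j y ∧ p ≠ j := by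
        intro p hp
        obtain ⟨j, hj, hj2⟩ := hA (m p) (hm p)
        refine ⟨j, hj.symm, hj ▸ hj2, ?_⟩
        rintro rfl
        omega
      obtain ⟨p, hp⟩ := hdσ y
      have hp : r p y < r p (m p) := lt_of_le_of_ne (hp _ (hsub (hm p)))
        fun h => hyτ (by rw [hr p h]; exact hm p)
      obtain ⟨j, hpj, hj, hpjne⟩ := hP p hp
      have hM : ∀ i, i ≠ p → r i (m i) < r i y := by
        intro i hip
        refine lt_of_le_of_ne ?_ fun h => hyτ (by rw [← hr i h]; exact hm i)
        by_contra hlt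
        push Not at hlt
        obtain ⟨j', hpj', hj', hpjne'⟩ := hP i hlt
        have u1 := huniq p j hpjne hpj
        have u2 := huniq i j' hpjne' hpj'
        have : i = j := by
          rcases u1 with ⟨v1, v2⟩ | ⟨v1, v2⟩ <;> rcases u2 with ⟨v3, v4⟩ | ⟨v3, v4⟩ <;>
            first
            | exact v3.trans v2.symm
            | exact absurd (v3.trans v1.symm) hip
        subst this
        omega
      have fin : ∀ z, (∀ i, i ≠ p → r i (m i) < r i z) →
          (∀ x, (∀ i, i ≠ p → r i (m i) < r i x) → r p x ≤ r p z) → y = z := by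
        intro z hz1 hz2
        obtain ⟨i, hi⟩ := hdσ z
        by_cases hip : i = p
        · subst hip
          exact hr i (le_antisymm (hz2 y hM) (hi y hyσ))
        · have h3 := hz1 i hip
          have h4 := hi _ (hsub (hm i))
          omega
      rcases huniq p j hpjne hpj with ⟨rfl, -⟩ | ⟨rfl, -⟩
      · left; rw [hσ, fin ya hya2 hya3]
      · right; rw [hσ, fin yb hyb2 hyb3]
    · rintro (rfl | rfl)
      · exact ⟨⟨hya4, by rw [Finset.card_insert_of_notMem hya1, hc]⟩, Finset.subset_insert _ _⟩
      · exact ⟨⟨hyb4, by rw [Finset.card_insert_of_notMem hyb1, hc]⟩, Finset.subset_insert _ _⟩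

/-- The starting door lies in exactly one room. -/
theorem scarf_start (r : I → Y → ℕ) (e : I → Y) (hr : ∀ i, Function.Injective (r i))
    (he : Function.Injective e) (h0 : ∀ i y, r i (e i) ≤ r i y)
    (h1 : ∀ i j x, j ≠ i → (∀ k, x ≠ e k) → r i x < r i (e j))
    (hX : ∃ x, ∀ k, x ≠ e k) (i0 : I) :
    ∃ σ₁ : Finset Y, ∀ σ : Finset Y,
      ((ScarfDom r σ ∧ σ.card = Fintype.card I) ∧ (Finset.univ.erase i0).image e ⊆ σ) ↔
        σ = σ₁ := by
  classical
  set τ := (Finset.univ.erase i0).image e with hτ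
  have hpos : 0 < Fintype.card I := Fintype.card_pos_iff.2 ⟨i0⟩
  have hc : τ.card + 1 = Fintype.card I := by
    rw [hτ, Finset.card_image_of_injective _ he, Finset.card_erase_of_mem (Finset.mem_univ _),
      Finset.card_univ]
    omega
  have hmem : ∀ j, j ≠ i0 → e j ∈ τ := fun j hj =>
    Finset.mem_image.2 ⟨j, by simp [hj], rfl⟩
  have hmem' : ∀ t ∈ τ, ∃ j, j ≠ i0 ∧ t = e j := by
    intro t ht
    obtain ⟨j, hj, rfl⟩ := Finset.mem_image.1 ht
    exact ⟨j, by simpa using hj, rfl⟩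
  obtain ⟨x0, hx0⟩ := hX
  obtain ⟨y, hy, hymax⟩ := Finset.exists_max_image
    (Finset.univ.filter fun x => ∀ k, x ≠ e k) (r i0) ⟨x0, by simpa using hx0⟩
  replace hy : ∀ k, y ≠ e k := by simpa using hy
  replace hymax : ∀ x, (∀ k, x ≠ e k) → r i0 x ≤ r i0 y := by
    intro x hx; exact hymax x (by simpa using hx)
  have hyτ : y ∉ τ := by
    intro h
    obtain ⟨j, -, hj⟩ := hmem' y h
    exact hy j hj
  refine ⟨insert y τ, fun σ => ⟨?_, ?_⟩⟩
  · rintro ⟨⟨hdσ, hcσ⟩, hsub⟩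
    have hcard : (σ \ τ).card = 1 := by
      rw [Finset.card_sdiff_of_subset hsub]; omega
    obtain ⟨z, hz⟩ := Finset.card_eq_one.1 hcard
    have hzd : z ∈ σ \ τ := by rw [hz]; simp
    obtain ⟨hzσ, hzτ⟩ := Finset.mem_sdiff.1 hzd
    have hσ : σ = insert z τ := by
      rw [← Finset.sdiff_union_of_subset hsub, hz]; rfl
    obtain ⟨i, hi⟩ := hdσ y
    have hii : i = i0 := by
      by_contra hne
      have h2 := hi _ (hsub (hmem i hne))
      exact hy i (hr i (le_antisymm h2 (h0 i y)))
    subst hii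
    have hzy := hi z hzσ
    have hze : ∀ k, z ≠ e k := by
      rintro k rfl
      by_cases hk : k = i
      · subst hk
        exact hy k (hr k (le_antisymm hzy (h0 k y)))
      · exact hzτ (hmem k hk)
    rw [hσ, hr i (le_antisymm (hymax z hze) hzy)]
  · rintro rfl
    refine ⟨⟨?_, by rw [Finset.card_insert_of_notMem hyτ, hc]⟩, Finset.subset_insert _ _⟩
    intro x
    by_cases hx : ∀ k, x ≠ e k
    · refine ⟨i0, fun s hs => ?_⟩
      rcases Finset.mem_insert.1 hs with rfl | hs
      · exact hymax x hx
      · obtain ⟨j, hj, rfl⟩ := hmem' s hs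
        exact (h1 i0 j x hj hx).le
    · push Not at hx
      obtain ⟨k, rfl⟩ := hx
      exact ⟨k, fun s _ => h0 k s⟩

theorem scarf_main (r : I → Y → ℕ) (e : I → Y) (c : Y → I)
    (hr : ∀ i, Function.Injective (r i))
    (hce : ∀ i, c (e i) = i) (h0 : ∀ i y, r i (e i) ≤ r i y)
    (h1 : ∀ i j x, j ≠ i → (∀ k, x ≠ e k) → r i x < r i (e j))
    (hX : ∃ x, ∀ k, x ≠ e k) (i0 : I) :
    ∃ σ : Finset Y, ScarfDom r σ ∧ σ.card = Fintype.card I ∧ σ.image c = Finset.univ := by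
  classical
  by_contra hno
  push Not at hno
  have he : Function.Injective e := fun i j h => by rw [← hce i, ← hce j, h]
  have hpos : 0 < Fintype.card I := Fintype.card_pos_iff.2 ⟨i0⟩
  let R : Finset (Finset Y) := Finset.univ.filter fun σ => ScarfDom r σ ∧ σ.card = Fintype.card I
  let D : Finset (Finset Y) := Finset.univ.filter fun τ =>
    ScarfDom r τ ∧ τ.card + 1 = Fintype.card I ∧ τ.image c = Finset.univ.erase i0
  have hcount := Finset.sum_card_bipartiteAbove_eq_sum_card_bipartiteBelow
    (s := D) (t := R) (fun τ σ => τ ⊆ σ)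
  have hright : Even (∑ σ ∈ R, (D.bipartiteBelow (fun τ σ => τ ⊆ σ) σ).card) := by
    refine Finset.even_sum _ fun σ hσ => ?_
    obtain ⟨hdσ, hcσ⟩ : ScarfDom r σ ∧ σ.card = Fintype.card I := by simpa [R] using hσ
    rcases Finset.eq_empty_or_nonempty (D.bipartiteBelow (fun τ σ => τ ⊆ σ) σ) with hE | ⟨τ, hτ⟩
    · rw [hE]; simp
    obtain ⟨hτD, hsub⟩ := Finset.mem_bipartiteBelow _ |>.1 hτ
    obtain ⟨hdτ, hcτ, hiτ⟩ : ScarfDom r τ ∧ τ.card + 1 = Fintype.card I ∧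
      τ.image c = Finset.univ.erase i0 := by simpa [D] using hτD
    have hcard : (σ \ τ).card = 1 := by
      rw [Finset.card_sdiff_of_subset hsub]; omega
    obtain ⟨z, hz⟩ := Finset.card_eq_one.1 hcard
    have hzσ : z ∈ σ \ τ := by rw [hz]; simp
    obtain ⟨hzσ, hzτ⟩ := Finset.mem_sdiff.1 hzσ
    have hσ' : σ = insert z τ := by
      rw [← Finset.sdiff_union_of_subset hsub, hz]; rfl
    have hinj : Set.InjOn c (τ : Set Y) := by
      apply Finset.injOn_of_card_image_eq
      rw [hiτ, Finset.card_erase_of_mem (Finset.mem_univ _), Finset.card_univ]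
      omega
    have hcz : c z ≠ i0 := by
      intro h
      apply hno σ hdσ hcσ
      rw [hσ', Finset.image_insert, hiτ, h, Finset.insert_erase (Finset.mem_univ _)]
    have : c z ∈ τ.image c := by rw [hiτ]; simp [hcz]
    obtain ⟨w, hw, hwz⟩ := Finset.mem_image.1 this
    have hwz' : w ≠ z := fun h => hzτ (h ▸ hw)
    have hiσ : σ.image c = Finset.univ.erase i0 := by
      rw [hσ', Finset.image_insert, Finset.insert_eq_of_mem this, hiτ]
    have htwo : D.bipartiteBelow (fun τ σ => τ ⊆ σ) σ = {σ.erase z, σ.erase w} := by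
      ext ρ
      rw [Finset.mem_bipartiteBelow, Finset.mem_insert, Finset.mem_singleton]
      constructor
      · rintro ⟨hρD, hρ⟩
        obtain ⟨hdρ, hcρ, hiρ⟩ : ScarfDom r ρ ∧ ρ.card + 1 = Fintype.card I ∧
          ρ.image c = Finset.univ.erase i0 := by simpa [D] using hρD
        by_cases hzρ : z ∈ ρ
        · right
          have hinjρ : Set.InjOn c (ρ : Set Y) := by
            apply Finset.injOn_of_card_image_eq
            rw [hiρ, Finset.card_erase_of_mem (Finset.mem_univ _), Finset.card_univ]
            omega
          have hwρ : w ∉ ρ := fun h => hwz' (hinjρ h hzρ hwz)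
          apply Finset.eq_of_subset_of_card_le (Finset.subset_erase.2 ⟨hρ, hwρ⟩)
          rw [Finset.card_erase_of_mem (hsub hw)]; omega
        · left
          apply Finset.eq_of_subset_of_card_le (Finset.subset_erase.2 ⟨hρ, hzρ⟩)
          rw [Finset.card_erase_of_mem hzσ]; omega
      · have hgen : ∀ u v, u ∈ σ → v ∈ σ → u ≠ v → c u = c v → σ.erase u ∈ D ∧ σ.erase u ⊆ σ := by
          intro u v hu hv huv hcuv
          refine ⟨?_, Finset.erase_subset _ _⟩
          have g1 := scarf_dom_mono r (Finset.erase_subset u σ) hdσ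
          have g2 : (σ.erase u).card + 1 = Fintype.card I := by
            rw [Finset.card_erase_of_mem hu]; omega
          have g3 : (σ.erase u).image c = Finset.univ.erase i0 := by
            rw [← hiσ]
            conv_rhs => rw [← Finset.insert_erase hu, Finset.image_insert]
            rw [Finset.insert_eq_of_mem]
            exact Finset.mem_image.2 ⟨v, Finset.mem_erase.2 ⟨huv.symm, hv⟩, hcuv.symm⟩
          exact Finset.mem_filter.2 ⟨Finset.mem_univ _, g1, g2, g3⟩
        rintro (rfl | rfl)
        · exact hgen z w hzσ (hsub hw) hwz'.symm hwz.symm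
        · exact hgen w z (hsub hw) hzσ hwz' hwz
    rw [htwo, Finset.card_pair]
    · exact even_two
    · intro h
      have : w ∈ σ.erase z := Finset.mem_erase.2 ⟨hwz', hsub hw⟩
      rw [h] at this
      simp at this
  set τ0 := (Finset.univ.erase i0).image e with hτ0
  have hτ0D : τ0 ∈ D := by
    refine Finset.mem_filter.2 ⟨Finset.mem_univ _, ?_, ?_, ?_⟩
    · obtain ⟨σ₁, hσ₁⟩ := scarf_start r e hr he h0 h1 hX i0
      obtain ⟨⟨h, -⟩, h'⟩ := (hσ₁ σ₁).2 rfl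
      exact scarf_dom_mono r h' h
    · rw [hτ0, Finset.card_image_of_injective _ he, Finset.card_erase_of_mem (Finset.mem_univ _),
        Finset.card_univ]
      omega
    · rw [hτ0, Finset.image_image]
      have : c ∘ e = id := funext hce
      rw [this, Finset.image_id]
  have hodd : Odd (∑ τ ∈ D, (R.bipartiteAbove (fun τ σ => τ ⊆ σ) τ).card) := by
    rw [← Finset.add_sum_erase _ _ hτ0D]
    apply Odd.add_even
    · obtain ⟨σ₁, hσ₁⟩ := scarf_start r e hr he h0 h1 hX i0
      have : R.bipartiteAbove (fun τ σ => τ ⊆ σ) τ0 = {σ₁} := by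
        ext σ
        rw [Finset.mem_bipartiteAbove, Finset.mem_singleton, ← hσ₁ σ]
        simp [R, hτ0]
      rw [this]; simp
    · refine Finset.even_sum _ fun τ hτ => ?_
      obtain ⟨hne, hτD⟩ := Finset.mem_erase.1 hτ
      obtain ⟨hdτ, hcτ, hiτ⟩ : ScarfDom r τ ∧ τ.card + 1 = Fintype.card I ∧
        τ.image c = Finset.univ.erase i0 := by simpa [D] using hτD
      have hx : ∃ x ∈ τ, ∀ k, x ≠ e k := by
        by_contra hcon
        push Not at hcon
        apply hne
        apply Finset.eq_of_subset_of_card_le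
        · intro t ht
          obtain ⟨k, rfl⟩ := hcon t ht
          refine Finset.mem_image.2 ⟨k, ?_, rfl⟩
          rw [← hiτ]
          exact Finset.mem_image.2 ⟨e k, ht, hce k⟩
        · rw [hτ0, Finset.card_image_of_injective _ he,
            Finset.card_erase_of_mem (Finset.mem_univ _), Finset.card_univ]
          omega
      obtain ⟨x, hx, hxe⟩ := hx
      obtain ⟨σ₁, σ₂, hne12, hiff⟩ := scarf_door r e hr he h0 h1 τ hdτ hcτ x hx hxe
      have : R.bipartiteAbove (fun τ σ => τ ⊆ σ) τ = {σ₁, σ₂} := by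
        ext σ
        rw [Finset.mem_bipartiteAbove, Finset.mem_insert, Finset.mem_singleton, ← hiff σ]
        simp [R]
      rw [this, Finset.card_pair hne12]
      exact even_two
  rw [hcount] at hodd
  exact (Nat.not_even_iff_odd.2 hodd) hright

end Scarf

theorem kkm_grid (n : ℕ) (hn : 0 < n) (N : ℕ) (c : (Fin n → ℕ) → Fin n) :
    ∃ z : Fin n → (Fin n → ℕ), (∀ i, ∑ k, z i k = N) ∧ (∀ i j k, z i k ≤ z j k + n) ∧
      ∀ i, c (z i) = i ∨ z i i ≤ n := by
  classical
  let F : Finset (Fin n → ℕ) := Finset.piAntidiag Finset.univ N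
  have hF : ∀ f, f ∈ F ↔ ∑ k, f k = N := by
    intro f; simp [F, Finset.mem_piAntidiag]
  let X := {f // f ∈ F}
  let M := Fintype.card X
  let enc : X ≃ Fin M := Fintype.equivFin X
  let i0 : Fin n := ⟨0, hn⟩
  let B := 1 + (N * M + M)
  let r : Fin n → X ⊕ Fin n → ℕ := fun i y => match y with
    | Sum.inl x => 1 + (x.1 i * M + enc x)
    | Sum.inr j => if j = i then 0 else B + j
  let e : Fin n → X ⊕ Fin n := Sum.inr
  let col : X ⊕ Fin n → Fin n := fun y => match y with
    | Sum.inl x => c x.1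
    | Sum.inr j => j
  have hrl : ∀ i x, r i (Sum.inl x) = 1 + (x.1 i * M + enc x) := fun _ _ => rfl
  have hrr : ∀ i j, r i (Sum.inr j) = if j = i then 0 else B + j := fun _ _ => rfl
  have hle : ∀ (x : X) i, x.1 i ≤ N := by
    intro x i
    rw [← (hF x.1).1 x.2]
    exact Finset.single_le_sum (f := x.1) (fun _ _ => Nat.zero_le _) (Finset.mem_univ i)
  have hlt : ∀ (x : X) i, r i (Sum.inl x) < B := by
    intro x i
    have h1 := (enc x).2
    have h2 := Nat.mul_le_mul_right M (hle x i)
    simp only [hrl, B]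
    omega
  have hrank : ∀ i (x y : X), r i (Sum.inl x) ≤ r i (Sum.inl y) → x.1 i ≤ y.1 i := by
    intro i x y h
    by_contra hc
    push Not at hc
    have h1 := (enc y).2
    have h2 := Nat.mul_le_mul_right M (Nat.succ_le_of_lt hc)
    rw [Nat.succ_mul] at h2
    simp only [hrl] at h
    omega
  have hr : ∀ i, Function.Injective (r i) := by
    intro i y y' h
    rcases y with x | j <;> rcases y' with x' | j'
    · have h1 := hrank i x x' h.le
      have h2 := hrank i x' x h.ge
      have h3 : x.1 i = x'.1 i := le_antisymm h1 h2
      simp only [hrl, h3] at h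
      have : enc x = enc x' := Fin.ext (by omega)
      rw [enc.injective this]
    · have h1 := hlt x i
      rw [h, hrr] at h1
      rw [hrl, hrr] at h
      split_ifs at h h1 <;> omega
    · have h1 := hlt x' i
      rw [← h, hrr] at h1
      rw [hrl, hrr] at h
      split_ifs at h h1 <;> omega
    · rw [hrr, hrr] at h
      congr 1
      split_ifs at h with g1 g2 g2
      · rw [g1, g2]
      · omega
      · omega
      · exact Fin.ext (by omega)
  obtain ⟨f0, hf0⟩ : ∃ f, f ∈ F := ⟨Pi.single i0 N, by rw [hF]; simp⟩
  obtain ⟨σ, hdom, hcard, himg⟩ := scarf_main r e col hr (fun _ => rfl)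
    (by intro i y; simp [e, hrr])
    (by
      intro i j x hj hx
      rcases x with x | k
      · have := hlt x i
        simp only [e, hrr, if_neg hj]
        omega
      · exact absurd rfl (hx k))
    ⟨Sum.inl ⟨f0, hf0⟩, by intro k h; exact Sum.inl_ne_inr h⟩ i0
  have hcinj : Set.InjOn col (σ : Set (X ⊕ Fin n)) := by
    apply Finset.injOn_of_card_image_eq
    rw [himg, hcard, Finset.card_univ]
  -- the active face
  let J : Finset (Fin n) := Finset.univ.filter fun j => (Sum.inr j : X ⊕ Fin n) ∉ σ
  have hJ : ∀ j, j ∈ J ↔ (Sum.inr j : X ⊕ Fin n) ∉ σ := by intro j; simp [J]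
  have hdomX : ∀ x : X, ∃ i ∈ J, ∀ s : X, Sum.inl s ∈ σ → x.1 i ≤ s.1 i := by
    intro x
    obtain ⟨i, hi⟩ := hdom (Sum.inl x)
    refine ⟨i, (hJ i).2 fun h => ?_, fun s hs => hrank i x s (hi _ hs)⟩
    have := hi _ h
    rw [hrl, hrr, if_pos rfl] at this
    omega
  have hcolJ : ∀ j ∈ J, ∃ s : X, Sum.inl s ∈ σ ∧ c s.1 = j := by
    intro j hj
    have : j ∈ σ.image col := by rw [himg]; simp
    obtain ⟨y, hy, hyj⟩ := Finset.mem_image.1 this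
    rcases y with s | k
    · exact ⟨s, hy, hyj⟩
    · have : k = j := hyj
      subst this
      exact absurd hy ((hJ k).1 hj)
  obtain ⟨j0, hj0, -⟩ := hdomX ⟨f0, hf0⟩
  obtain ⟨s0, hs0, -⟩ := hcolJ j0 hj0
  let S : Finset X := Finset.univ.filter fun s => (Sum.inl s : X ⊕ Fin n) ∈ σ
  have hS : ∀ s, s ∈ S ↔ (Sum.inl s : X ⊕ Fin n) ∈ σ := by intro s; simp [S]
  have hminex : ∀ i, ∃ s ∈ S, ∀ t ∈ S, s.1 i ≤ t.1 i := fun i =>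
    Finset.exists_min_image S (fun s => s.1 i) ⟨s0, (hS s0).2 hs0⟩
  choose μ hμS hμ using hminex
  let m : Fin n → ℕ := fun i => (μ i).1 i
  have hsum : N < ∑ i ∈ J, (m i + 1) := by
    by_contra hcon
    push Not at hcon
    let f : Fin n → ℕ := fun i => (if i ∈ J then m i + 1 else 0) +
      (if i = j0 then N - ∑ i ∈ J, (m i + 1) else 0)
    have hf : f ∈ F := by
      rw [hF]
      simp only [f, Finset.sum_add_distrib, Finset.sum_ite_mem, Finset.univ_inter,
        Finset.sum_ite_eq', Finset.mem_univ, if_true]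
      rw [Finset.sum_add_distrib] at hcon
      omega
    obtain ⟨i, hi, hi2⟩ := hdomX ⟨f, hf⟩
    have h3 := hi2 (μ i) ((hS _).1 (hμS i))
    have h4 : m i + 1 ≤ f i := by simp [f, hi]
    have h5 : (μ i).1 i = m i := rfl
    simp only [h5] at h3
    omega
  have hsum' : N < ∑ i ∈ J, m i + n := by
    rw [Finset.sum_add_distrib, Finset.sum_const, smul_eq_mul, mul_one] at hsum
    have : J.card ≤ n := by simpa using Finset.card_le_univ J
    omega
  have hsmall : ∀ s ∈ S, ∀ i, i ∉ J → s.1 i ≤ n := by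
    intro s hs i hi
    have h1 : ∑ k ∈ insert i J, s.1 k ≤ N := by
      rw [← (hF s.1).1 s.2]
      exact Finset.sum_le_sum_of_subset (Finset.subset_univ _)
    rw [Finset.sum_insert hi] at h1
    have h2 : ∑ k ∈ J, m k ≤ ∑ k ∈ J, s.1 k := Finset.sum_le_sum fun k _ => hμ k s hs
    omega
  have hclose : ∀ s ∈ S, ∀ i ∈ J, s.1 i ≤ m i + n := by
    intro s hs i hi
    have h1 : ∑ k ∈ J, s.1 k ≤ N := by
      rw [← (hF s.1).1 s.2]
      exact Finset.sum_le_sum_of_subset (Finset.subset_univ _)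
    rw [← Finset.add_sum_erase _ _ hi] at h1 hsum'
    have h2 : ∑ k ∈ J.erase i, m k ≤ ∑ k ∈ J.erase i, s.1 k :=
      Finset.sum_le_sum fun k _ => hμ k s hs
    omega
  have hz : ∀ i, ∃ s ∈ S, c s.1 = i ∨ s.1 i ≤ n := by
    intro i
    by_cases hi : i ∈ J
    · obtain ⟨s, hs, hc⟩ := hcolJ i hi
      exact ⟨s, (hS s).2 hs, Or.inl hc⟩
    · exact ⟨s0, (hS s0).2 hs0, Or.inr (hsmall s0 ((hS s0).2 hs0) i hi)⟩
  choose z hzS hz using hz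
  refine ⟨fun i => (z i).1, fun i => (hF _).1 (z i).2, fun i j k => ?_, hz⟩
  change (z i).1 k ≤ (z j).1 k + n
  by_cases hk : k ∈ J
  · have h1 := hclose (z i) (hzS i) k hk
    have h2 : m k ≤ (z j).1 k := hμ k (z j) (hzS j)
    omega
  · have h1 := hsmall (z i) (hzS i) k hk
    omega

theorem kkm_approx (n : ℕ) (hn : 0 < n) (φ : Fin n → (Fin n → ℝ) → ℝ)
    (hφ : ∀ w ∈ stdSimplex ℝ (Fin n), ∃ i, 0 ≤ φ i w) (N : ℕ) :
    ∃ z : Fin n → (Fin n → ℝ), (∀ i, z i ∈ stdSimplex ℝ (Fin n)) ∧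
      (∀ i j k, z i k ≤ z j k + n / ((N : ℝ) + 1)) ∧
      ∀ i, 0 ≤ φ i (z i) ∨ z i i ≤ n / ((N : ℝ) + 1) := by
  classical
  have hN : (0 : ℝ) < (N : ℝ) + 1 := by positivity
  let sc : (Fin n → ℕ) → (Fin n → ℝ) := fun f k => f k / ((N : ℝ) + 1)
  have hsc : ∀ f, ∑ k, f k = N + 1 → sc f ∈ stdSimplex ℝ (Fin n) := by
    intro f hf
    refine ⟨fun k => by positivity, ?_⟩
    simp only [sc]
    rw [← Finset.sum_div, div_eq_one_iff_eq hN.ne']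
    exact_mod_cast hf
  have hcex : ∀ f : Fin n → ℕ, ∃ i, ∑ k, f k = N + 1 → 0 ≤ φ i (sc f) := by
    intro f
    by_cases hf : ∑ k, f k = N + 1
    · obtain ⟨i, hi⟩ := hφ _ (hsc f hf)
      exact ⟨i, fun _ => hi⟩
    · exact ⟨⟨0, hn⟩, fun h => absurd h hf⟩
  choose c hc using hcex
  obtain ⟨z, hz1, hz2, hz3⟩ := kkm_grid n hn (N + 1) c
  refine ⟨fun i => sc (z i), fun i => hsc _ (hz1 i), fun i j k => ?_, fun i => ?_⟩
  · simp only [sc]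
    rw [← add_div]
    gcongr
    exact_mod_cast hz2 i j k
  · rcases hz3 i with h | h
    · left
      have := hc (z i) (hz1 i)
      rwa [h] at this
    · right
      simp only [sc]
      gcongr

theorem kkm_limit (n : ℕ) (hn : 0 < n) (φ : Fin n → (Fin n → ℝ) → ℝ)
    (hcont : ∀ i, Continuous (φ i))
    (hφ : ∀ w ∈ stdSimplex ℝ (Fin n), ∃ i, 0 ≤ φ i w) :
    ∃ w ∈ stdSimplex ℝ (Fin n), ∀ i, 0 ≤ φ i w ∨ w i ≤ 0 := by
  choose z hz1 hz2 hz3 using kkm_approx n hn φ hφ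
  obtain ⟨w, hw, g, hg, hlim⟩ := (isCompact_stdSimplex ℝ (Fin n)).tendsto_subseq
    (x := fun N => z N ⟨0, hn⟩) (fun N => hz1 N _)
  have hε : Filter.Tendsto (fun N : ℕ => (n : ℝ) / ((g N : ℝ) + 1)) Filter.atTop (nhds 0) := by
    have h := (tendsto_one_div_add_atTop_nhds_zero_nat (𝕜 := ℝ)).const_mul (n : ℝ)
    rw [mul_zero] at h
    have h2 := h.comp hg.tendsto_atTop
    refine h2.congr fun N => ?_
    simp [div_eq_mul_inv]
  have hlim0 : ∀ k, Filter.Tendsto (fun N => z (g N) ⟨0, hn⟩ k) Filter.atTop (nhds (w k)) :=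
    fun k => (tendsto_pi_nhds.1 hlim) k
  have hlimi : ∀ i, Filter.Tendsto (fun N => z (g N) i) Filter.atTop (nhds w) := by
    intro i
    rw [tendsto_pi_nhds]
    intro k
    have hlo := (hlim0 k).sub hε
    have hhi := (hlim0 k).add hε
    rw [sub_zero] at hlo
    rw [add_zero] at hhi
    refine tendsto_of_tendsto_of_tendsto_of_le_of_le hlo hhi (fun N => ?_) (fun N => ?_)
    · have := hz2 (g N) ⟨0, hn⟩ i k
      simp only
      linarith
    · exact hz2 (g N) i ⟨0, hn⟩ k
  refine ⟨w, hw, fun i => ?_⟩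
  by_contra hcon
  push Not at hcon
  obtain ⟨h1, h2⟩ := hcon
  have e1 : ∀ᶠ N in Filter.atTop, φ i (z (g N) i) < 0 :=
    (((hcont i).tendsto w).comp (hlimi i)).eventually (gt_mem_nhds h1)
  have e2 : ∀ᶠ N in Filter.atTop, 0 < z (g N) i i - n / ((g N : ℝ) + 1) := by
    have := ((tendsto_pi_nhds.1 (hlimi i)) i).sub hε
    rw [sub_zero] at this
    exact this.eventually (lt_mem_nhds h2)
  obtain ⟨N, a1, a2⟩ := (e1.and e2).exists
  rcases hz3 (g N) i with h | h <;> linarith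

/-- Knaster–Kuratowski–Mazurkiewicz, support version: if closed
subsets `C 1, …, C n` of the standard simplex are such that every point `w` of
the simplex belongs to `C i` for some coordinate `i` in the support of `w`,
then the sets have a common point. -/
theorem stmt14 (n : ℕ) (C : Fin n → Set (Fin n → ℝ))
    (hsub : ∀ i, C i ⊆ stdSimplex ℝ (Fin n))
    (hclosed : ∀ i, IsClosed (C i))
    (hcover : ∀ w ∈ stdSimplex ℝ (Fin n), ∃ i, 0 < w i ∧ w ∈ C i) :
    (⋂ i, C i).Nonempty := by
  classical
  rcases Nat.eq_zero_or_pos n with rfl | hn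
  · exact ⟨fun _ => 0, by simp⟩
  have hne : ∀ i, (C i).Nonempty := by
    intro i
    obtain ⟨j, hj, hj2⟩ := hcover (Pi.single i 1) (single_mem_stdSimplex ℝ i)
    have : j = i := by
      by_contra h
      simp [h] at hj
    subst this
    exact ⟨_, hj2⟩
  let d : Fin n → (Fin n → ℝ) → ℝ := fun i w => Metric.infDist w (C i)
  have hd0 : ∀ i w, 0 ≤ d i w := fun i w => Metric.infDist_nonneg
  have hdc : ∀ i, Continuous (d i) := fun i => Metric.continuous_infDist_pt _
  have hsum0 : ∀ w ∈ stdSimplex ℝ (Fin n), ∑ i, (d i w - w i * ∑ j, d j w) = 0 := by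
    intro w hw
    rw [Finset.sum_sub_distrib, ← Finset.sum_mul, hw.2, one_mul, sub_self]
  obtain ⟨w, hw, hlim⟩ := kkm_limit n hn (fun i w => d i w - w i * ∑ j, d j w)
    (fun i => (hdc i).sub ((continuous_apply i).mul (continuous_finsetSum _ fun j _ => hdc j)))
    (by
      intro w hw
      by_contra hcon
      push Not at hcon
      have := Finset.sum_lt_sum_of_nonempty (s := (Finset.univ : Finset (Fin n)))
        ⟨⟨0, hn⟩, Finset.mem_univ _⟩ (fun i _ => hcon i)
      rw [hsum0 w hw] at this
      simp at this)
  have hnn : ∀ i, 0 ≤ d i w - w i * ∑ j, d j w := by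
    intro i
    rcases hlim i with h | h
    · exact h
    · have : w i = 0 := le_antisymm h (hw.1 i)
      rw [this, zero_mul, sub_zero]
      exact hd0 i w
  have hall := (Finset.sum_eq_zero_iff_of_nonneg (fun i _ => hnn i)).1 (hsum0 w hw)
  obtain ⟨i, hi, hiC⟩ := hcover w hw
  have hdi : d i w = 0 := Metric.infDist_zero_of_mem hiC
  have h1 := hall i (Finset.mem_univ _)
  rw [hdi] at h1
  have hD : ∑ j, d j w = 0 := by
    rcases mul_eq_zero.1 (show w i * ∑ j, d j w = 0 by linarith) with h | h
    · exact absurd h hi.ne'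
    · exact h
  refine ⟨w, Set.mem_iInter.2 fun k => ?_⟩
  have hk := (Finset.sum_eq_zero_iff_of_nonneg (fun i _ => hd0 i w)).1 hD k (Finset.mem_univ _)
  exact ((hclosed k).mem_iff_infDist_zero (hne k)).2 hk
end
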